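/- arXiv:2601.08715 — 3 statements merged into one kernel-verified Lean document; each statement's English description precedes it below -/
import Mathlib

section
/- Let n ≥ 4, let s = [n n-1 … 1] ∈ S_n, r = (1 2 … n), δ = (1 2), and let dist be the word metric on S_n with respect to {δ, r, r^{-1}}. Then dist(s r^{n-2}, 1) ≥ n(n-1)/2. In particular the diameter of the Cayley graph of S_n with generating set {(1 2), (1 2 … n), (1 n … 2)} is at least n(n-1)/2. -/
/-- The transposition `δ = (1 2)` in `S_n` (0-indexed: swaps `0` and `1`). -/
def delta (n : ℕ) (hn : 2 ≤ n) : Equiv.Perm (Fin n) :=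
  Equiv.swap ⟨0, by omega⟩ ⟨1, by omega⟩

/-- The symmetric generating set `{(1 2), (1 2 … n), (1 n … 2)}` of `S_n`. -/
def gens (n : ℕ) (hn : 2 ≤ n) : Set (Equiv.Perm (Fin n)) :=
  {delta n hn, finRotate n, (finRotate n)⁻¹}

/-- `IsMinWordLen n hn g d` says that `d` is the minimal length of a word in the
generators `{(1 2), (1 2 … n), (1 n … 2)}` whose product is `g`; i.e. the distance
in the Cayley graph from `1` to `g` is exactly `d`. -/
def IsMinWordLen (n : ℕ) (hn : 2 ≤ n) (g : Equiv.Perm (Fin n)) (d : ℕ) : Prop :=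
  (∃ l : List (Equiv.Perm (Fin n)),
      (∀ x ∈ l, x ∈ gens n hn) ∧ l.prod = g ∧ l.length = d) ∧
  (∀ l : List (Equiv.Perm (Fin n)),
      (∀ x ∈ l, x ∈ gens n hn) → l.prod = g → d ≤ l.length)

/-!
Let a head walk along the cycle of `n` places, `r` and `r⁻¹` moving it by one place and `δ`
exchanging the two tokens next to it; `s r^(n-2)` acts on this picture as a reflection. Each
rotation makes the head pass exactly one token and each `δ` exchanges exactly one pair of tokens, so
the length of a word is the number of passes plus the number of exchanges.

Lift everything to the universal cover `ℤ`, and divide the tokens into `E` even and `O` odd ones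
according to how many full turns they are finally ahead of the head. As a reflection reverses the
cyclic order, two tokens of the same class are exchanged at least once, which accounts for
`E (E - 1) / 2 + O (O - 1) / 2` letters. It remains to find `E O` passes.

Moving the final part of the word, mirrored, to its front, one may assume that the head ends at `0`
or `1`. For the even tokens the net numbers of passes are then (up to tokens passed at least `n - 1`
times) distinct integers of the same parity, whose absolute values add up to about `E² / 2`. For the
odd tokens one uses instead the net number of passes up to a moment at which the head is at the
place `⌈n / 2⌉` of the cycle, minus the net number after it: these are again distinct integers of
the same parity, giving about `O² / 2`. The parities of the two families are such that the sum is
at least `E O`. If there is no such moment, no token moves between that place and the one before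
it, and then all tokens but at most one are odd.
-/

open Finset Equiv

/-! ### Sums of distinct integers -/

section Sums

variable {ι : Type*} {s : Finset ι} {f N : ι → ℤ} {c m : ℤ}

lemma card_mul_le_two_mul_sum_of_injOn (hf : Set.InjOn f s) (hc : ∀ i ∈ s, c ≤ f i) :
    (#s : ℤ) * (#s - 1 + 2 * c) ≤ 2 * ∑ i ∈ s, f i := by
  have gauss : ∀ k : ℕ, 2 * ∑ m ∈ range k, (c + m) = (k : ℤ) * (k - 1 + 2 * c) := by
    intro k
    induction k with
    | zero => simp
    | succ k ih => rw [sum_range_succ, mul_add, ih]; push_cast; ring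
  have key := Finset.sum_range_le_sum (s := s.image f) (c := c) (by simpa using hc)
  rw [sum_image hf, card_image_of_injOn hf] at key
  rw [← gauss]
  gcongr

/-- The values `2 * f i + c` are distinct integers of one parity, so the left-hand side is attained
when they are as close to `0` as possible. -/
lemma card_sq_sub_le_two_mul_sum_abs (hf : Set.InjOn f s) :
    (#s : ℤ) ^ 2 - (if Even c then 1 else 0) ≤ 2 * ∑ i ∈ s, |2 * f i + c| := by
  obtain ⟨k, ε, rfl, hε⟩ : ∃ k ε : ℤ, c = 2 * k + ε ∧ (ε = 0 ∨ ε = 1) := ⟨c / 2, c % 2, by omega⟩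
  have hparity : (if Even (2 * k + ε) then 1 else 0 : ℤ) = 1 - ε := by
    rcases hε with rfl | rfl <;> simp
  set P := s.filter (0 ≤ f · + k)
  set Q := s.filter (¬ 0 ≤ f · + k)
  have hP : 2 * ∑ i ∈ P, f i + #P * (2 * k + ε) = ∑ i ∈ P, |2 * f i + (2 * k + ε)| := by
    rw [mul_sum, ← nsmul_eq_mul, ← sum_const, ← sum_add_distrib]
    refine sum_congr rfl fun i hi ↦ ?_
    grind
  have hQ : 2 * ∑ i ∈ Q, -f i - #Q * (2 * k + ε) = ∑ i ∈ Q, |2 * f i + (2 * k + ε)| := by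
    rw [mul_sum, ← nsmul_eq_mul, ← sum_const, ← sum_sub_distrib]
    refine sum_congr rfl fun i hi ↦ ?_
    grind
  have hsumP := card_mul_le_two_mul_sum_of_injOn (s := P) (c := -k)
    (hf.mono (coe_subset.2 (filter_subset _ _))) (by grind)
  have hsumQ := card_mul_le_two_mul_sum_of_injOn (s := Q) (f := fun i ↦ -f i) (c := k + 1)
    ((neg_injective.comp_injOn hf).mono (coe_subset.2 (filter_subset _ _))) (by grind)
  have hcard : (#s : ℤ) = #P + #Q := mod_cast (card_filter_add_card_filter_not _).symm
  rw [hparity, hcard, ← sum_filter_add_sum_filter_not s (0 ≤ f · + k), ← hP, ← hQ]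
  have hsq : ε ^ 2 = ε := by rcases hε with rfl | rfl <;> rfl
  nlinarith [sq_nonneg ((#P : ℤ) - #Q - (1 - ε))]

lemma card_sq_sub_le_two_mul_sum_of_le_or_abs_le (hm : #s ≤ m) (hf : Set.InjOn f s)
    (hN : ∀ i ∈ s, m ≤ N i ∨ |2 * f i + c| ≤ N i) :
    (#s : ℤ) ^ 2 - (if Even c then 1 else 0) ≤ 2 * ∑ i ∈ s, N i := by
  set H := s.filter (m ≤ N ·)
  set L := s.filter (¬ m ≤ N ·)
  have hH : (#H : ℤ) * m ≤ ∑ i ∈ H, N i := by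
    rw [← nsmul_eq_mul]
    exact card_nsmul_le_sum _ _ _ fun i hi ↦ (mem_filter.1 hi).2
  have hL : ∑ i ∈ L, |2 * f i + c| ≤ ∑ i ∈ L, N i :=
    sum_le_sum fun i hi ↦ (hN i (mem_filter.1 hi).1).resolve_left (mem_filter.1 hi).2
  have habs := card_sq_sub_le_two_mul_sum_abs (c := c)
    (hf.mono (coe_subset.2 (filter_subset (¬ m ≤ N ·) s)))
  have hcard : (#s : ℤ) = #H + #L := mod_cast (card_filter_add_card_filter_not _).symm
  rw [hcard, ← sum_filter_add_sum_filter_not s (m ≤ N ·)]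
  nlinarith [mul_nonneg (Nat.cast_nonneg (α := ℤ) #H) (sub_nonneg.2 hm)]

lemma sum_ite_le_one {P : ι → Prop} [DecidablePred P]
    (h : ∀ i ∈ s, ∀ j ∈ s, P i → P j → i = j) : ∑ i ∈ s, (if P i then 1 else 0 : ℤ) ≤ 1 := by
  rw [sum_boole]
  exact_mod_cast card_le_one.2 (by grind)

end Sums

lemma card_offDiag_add_card_offDiag_compl_le_sum {α : Type*} [Fintype α] [DecidableEq α]
    {K : α × α → ℤ} (A : Finset α) (hK : ∀ p, 0 ≤ K p)
    (hA : ∀ i j, i ≠ j → (i ∈ A ↔ j ∈ A) → 1 ≤ K (i, j)) :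
    (#A.offDiag + #Aᶜ.offDiag : ℤ) ≤ ∑ p ∈ univ.offDiag, K p := by
  have hdisj : Disjoint A.offDiag Aᶜ.offDiag :=
    disjoint_left.2 fun p hp hp' ↦ mem_compl.1 (mem_offDiag.1 hp').1 (mem_offDiag.1 hp).1
  calc (#A.offDiag + #Aᶜ.offDiag : ℤ) = ∑ p ∈ A.offDiag ∪ Aᶜ.offDiag, 1 := by
        rw [sum_const, card_union_of_disjoint hdisj]; simp
    _ ≤ ∑ p ∈ A.offDiag ∪ Aᶜ.offDiag, K p := sum_le_sum fun p hp ↦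
        hA _ _ (by grind) (by grind [mem_compl])
    _ ≤ ∑ p ∈ univ.offDiag, K p :=
        sum_le_sum_of_subset_of_nonneg (by grind) fun p _ _ ↦ hK p

lemma cast_card_offDiag {α : Type*} (A : Finset α) : (#A.offDiag : ℤ) = #A * (#A - 1) := by
  classical
  rw [offDiag_card, Nat.cast_sub (Nat.le_mul_self _)]
  push_cast
  ring

/-! ### Words and their permutations -/

/-- The moves of the head. A word in these letters acts like a product of permutations, its last
letter first. -/
inductive Letter
  | right
  | left
  | swap

namespace Letter

/-- The permutation of the places, numbered relative to the head, caused by a move: when the head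
moves to the left, every token moves to the right relative to it. -/
def toPerm (n : ℕ) [NeZero n] : Letter → Perm (Fin n)
  | right => (finRotate n)⁻¹
  | left => finRotate n
  | swap => Equiv.swap 0 1

/-- The letter describing the same move seen in a mirror. -/
def mirror : Letter → Letter
  | right => left
  | left => right
  | swap => swap

/-- The displacement of the head caused by a move. -/
def displacement : Letter → ℤ
  | right => 1
  | left => -1
  | swap => 0

end Letter

/-- The product in `S_n` of the generators named by a word. -/
def wordPerm (n : ℕ) [NeZero n] (W : List Letter) : Perm (Fin n) := (W.map (Letter.toPerm n)).prod

/-- The net displacement of the head along a word. -/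
def netDisplacement (W : List Letter) : ℤ := (W.map Letter.displacement).sum

/-- The reflection `i ↦ 1 - i` of `ℤ/n`, which is the permutation `s r^(n-2)`. -/
def reflection (n : ℕ) [NeZero n] : Perm (Fin n) := Equiv.subLeft 1

section Words

variable {n : ℕ} [NeZero n] {u v W : List Letter} {m : ℤ}

lemma wordPerm_cons (x : Letter) (W : List Letter) :
    wordPerm n (x :: W) = x.toPerm n * wordPerm n W := by
  simp [wordPerm]

lemma wordPerm_append (u v : List Letter) : wordPerm n (u ++ v) = wordPerm n u * wordPerm n v := by
  simp [wordPerm]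

lemma netDisplacement_append (u v : List Letter) :
    netDisplacement (u ++ v) = netDisplacement u + netDisplacement v := by
  simp [netDisplacement]

lemma netDisplacement_map_mirror (W : List Letter) :
    netDisplacement (W.map Letter.mirror) = -netDisplacement W := by
  have h (x : Letter) : x.mirror.displacement = -x.displacement := by cases x <;> rfl
  simp [netDisplacement, Function.comp_def, h, List.sum_neg]

lemma exists_wordPerm_eq_prod (hn : 2 ≤ n) {l : List (Perm (Fin n))} (hl : ∀ x ∈ l, x ∈ gens n hn) :
    ∃ W : List Letter, W.length = l.length ∧ wordPerm n W = l.prod := by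
  have hone : (⟨1, hn⟩ : Fin n) = 1 := Fin.ext (Nat.mod_eq_of_lt hn).symm
  have hgens : gens n hn ⊆ Set.range (Letter.toPerm n) := by
    rintro x (rfl | rfl | rfl)
    · exact ⟨.swap, by rw [delta, hone]; rfl⟩
    · exact ⟨.left, rfl⟩
    · exact ⟨.right, rfl⟩
  obtain ⟨W, rfl⟩ : l ∈ Set.range (List.map (Letter.toPerm n)) := by
    rw [Set.range_list_map]
    exact fun x hx ↦ hgens (hl x hx)
  exact ⟨W, by simp, rfl⟩

lemma reflection_apply (i : Fin n) : reflection n i = 1 - i := rfl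

lemma reflection_mul_self : reflection n * reflection n = 1 := by
  ext i
  simp [reflection_apply]

lemma reflection_inv : (reflection n)⁻¹ = reflection n :=
  inv_eq_of_mul_eq_one_left reflection_mul_self

lemma revPerm_mul_finRotate_pow (hn : 2 ≤ n) :
    Fin.revPerm * finRotate n ^ (n - 2) = reflection n := by
  have hpow (k : ℕ) (i : Fin n) : ((finRotate n ^ k) i : ℕ) = (i + k) % n := by
    induction k with
    | zero => simp [Nat.mod_eq_of_lt]
    | succ k ih =>
      rw [pow_succ', Perm.mul_apply, finRotate_apply, Fin.val_add, Fin.val_one', ih,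
        ← Nat.add_mod, add_assoc]
  ext i
  rw [Perm.mul_apply, Fin.revPerm_apply, Fin.val_rev, hpow, reflection_apply, Fin.val_sub,
    Fin.val_one', Nat.mod_eq_of_lt hn]
  rcases lt_or_ge (i : ℕ) 2 with hi | hi
  · rw [Nat.mod_eq_of_lt (by omega)]
    interval_cases (i : ℕ)
    · rw [Nat.sub_zero, Nat.add_mod_left, Nat.mod_eq_of_lt hn]; omega
    · rw [Nat.sub_add_cancel (by omega), Nat.mod_self]; omega
  · rw [Nat.mod_eq_sub_mod (by omega), Nat.mod_eq_of_lt (by omega), Nat.mod_eq_of_lt (by omega)]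
    omega

lemma Letter.toPerm_right_apply (i : Fin n) : Letter.right.toPerm n i = i - 1 :=
  finRotate_symm_apply i

lemma Letter.toPerm_left_apply (i : Fin n) : Letter.left.toPerm n i = i + 1 := finRotate_apply i

lemma Letter.toPerm_mirror (x : Letter) :
    x.mirror.toPerm n = MulAut.conj (reflection n) (x.toPerm n) := by
  cases x
  case swap =>
    rw [MulAut.conj_apply, Letter.toPerm, ← swap_apply_apply, reflection_apply, reflection_apply,
      sub_zero, sub_self, swap_comm]
    rfl
  all_goals
    refine Equiv.ext fun i ↦ ?_
    simp only [Letter.mirror, MulAut.conj_apply, Perm.mul_apply, reflection_inv,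
      reflection_apply, Letter.toPerm_right_apply, Letter.toPerm_left_apply]
    abel

lemma wordPerm_map_mirror (W : List Letter) :
    wordPerm n (W.map Letter.mirror) = MulAut.conj (reflection n) (wordPerm n W) := by
  simp only [wordPerm, map_list_prod, List.map_map, Function.comp_def, Letter.toPerm_mirror]

lemma wordPerm_map_mirror_append (h : wordPerm n (u ++ v) = reflection n) :
    wordPerm n (v.map Letter.mirror ++ u) = reflection n := by
  rw [wordPerm_append] at h ⊢
  rw [wordPerm_map_mirror, MulAut.conj_apply, eq_inv_mul_of_mul_eq h, reflection_inv]
  calc _ = reflection n * (wordPerm n u)⁻¹ * (reflection n * reflection n) * wordPerm n u := by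
        group
    _ = reflection n := by rw [reflection_mul_self]; group

lemma exists_append_netDisplacement_eq (hm : 0 ≤ m) (hW : m ≤ netDisplacement W) :
    ∃ u v, W = u ++ v ∧ netDisplacement u = m ∧ (m = 0 ∨ ∃ t, u = t ++ [.right]) := by
  induction W using List.reverseRecOn with
  | nil => exact ⟨[], [], rfl, hm.antisymm hW, .inl (hW.antisymm hm)⟩
  | append_singleton W x ih =>
    rcases le_or_gt m (netDisplacement W) with hle | hlt
    · obtain ⟨u, v, rfl, h⟩ := ih hle
      exact ⟨u, v ++ [x], List.append_assoc .., h⟩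
    · have hx : netDisplacement (W ++ [x]) = netDisplacement W + x.displacement := by
        simp [netDisplacement]
      cases x <;> simp only [Letter.displacement] at hx
      case right =>
        exact ⟨W ++ [.right], [], (List.append_nil _).symm, by omega, .inr ⟨W, rfl⟩⟩
      all_goals omega

/-- A word with which the head returns to its initial place, or which starts by moving the head to
the right and has net displacement `1`. -/
def IsNearlyClosed (W : List Letter) : Prop :=
  netDisplacement W = 0 ∨ netDisplacement W = 1 ∧ ∃ t, W = t ++ [.right]

/-- Moving the final part of a word, mirrored, to its front turns a word for the reflection into
another one and changes the net displacement from `a + b` to `a - b`. -/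
lemma exists_isNearlyClosed_wordPerm_eq_reflection (hW : wordPerm n W = reflection n) :
    ∃ W', W'.length = W.length ∧ wordPerm n W' = reflection n ∧ IsNearlyClosed W' := by
  wlog h : 0 ≤ netDisplacement W generalizing W
  · obtain ⟨W', hlen, hW'⟩ := this (W := W.map Letter.mirror)
      (by simpa using wordPerm_map_mirror_append (u := []) hW)
      (by rw [netDisplacement_map_mirror]; omega)
    exact ⟨W', by simpa using hlen, hW'⟩
  obtain ⟨u, v, rfl, hu, hlast⟩ := exists_append_netDisplacement_eq (W := W)
    (m := (netDisplacement W + 1) / 2) (by omega) (by omega)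
  rw [netDisplacement_append] at hu h hlast
  refine ⟨v.map .mirror ++ u, by simp [add_comm], wordPerm_map_mirror_append hW, ?_⟩
  rw [IsNearlyClosed, netDisplacement_append, netDisplacement_map_mirror]
  rcases hlast with hm | ⟨t, ht⟩
  · omega
  · have hlast : ∃ t', v.map .mirror ++ u = t' ++ [.right] :=
      ⟨v.map .mirror ++ t, by rw [ht, List.append_assoc]⟩
    rw [and_iff_left hlast]
    omega

end Words

/-! ### The moving head -/

/-- The displacement of a token at `y` when the places `0` and `1` modulo `n` are exchanged. -/
def hop (n : ℕ) (y : ℤ) : ℤ := if y % n = 0 then 1 else if y % n = 1 then -1 else 0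

lemma add_hop_ediv_and_emod {n : ℕ} (hn : 2 ≤ n) (y : ℤ) :
    (y + hop n y) / n = y / n ∧ (y + hop n y) % n = y % n + hop n y := by
  have h0 := Int.emod_nonneg y (show (n : ℤ) ≠ 0 by omega)
  have h1 := Int.emod_lt_of_pos y (show (0 : ℤ) < n by omega)
  have h2 := Int.emod_add_mul_ediv y n
  rw [Int.ediv_emod_unique (by omega)]
  rw [hop]
  split_ifs <;> omega

/-- Tokens `0, …, n - 1` standing on the integers, the universal cover of `ℤ/n`, and a head between
the places `head - 1` and `head`. A token at `p` also occupies the places `p + n * k`. -/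
structure Config (n : ℕ) where
  pos : Fin n → ℤ
  head : ℤ

namespace Config

variable {n : ℕ} (c : Config n)

/-- The place of a token relative to the head, which stands between the places `0` and `1`. -/
def offset (j : Fin n) : ℤ := c.pos j - c.head + 1

/-- A move of the head; `swap` exchanges the tokens on its two sides. -/
def step : Letter → Config n
  | .right => ⟨c.pos, c.head + 1⟩
  | .left => ⟨c.pos, c.head - 1⟩
  | .swap => ⟨fun j ↦ c.pos j + hop n (c.offset j), c.head⟩

variable {c}

lemma offset_step_swap (j : Fin n) : (c.step .swap).offset j = c.offset j + hop n (c.offset j) := by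
  simp only [step, offset]
  ring

end Config

/-- The configuration reached by a word, whose last letter acts first, when token `j` starts at `j`
and the head at `0`. -/
def run (n : ℕ) (W : List Letter) : Config n := W.foldr (fun x c ↦ c.step x) ⟨fun j ↦ j, 0⟩

section Run

variable {n : ℕ}

lemma head_run (W : List Letter) : (run n W).head = netDisplacement W := by
  induction W with
  | nil => rfl
  | cons x W ih =>
    rw [netDisplacement, List.map_cons, List.sum_cons, ← netDisplacement, ← ih, add_comm]
    cases x <;> simp [run, Config.step, Letter.displacement, sub_eq_add_neg]

variable [NeZero n]

lemma coe_add_one (i : Fin n) : ((i + 1 : Fin n) : ℤ) = (i + 1) % n := by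
  simp [Fin.val_add]

lemma coe_sub_one (i : Fin n) : ((i - 1 : Fin n) : ℤ) = (i - 1) % n := by
  have h := coe_add_one (i - 1)
  rw [sub_add_cancel i 1] at h
  rw [h, Int.emod_sub_emod, add_sub_cancel_right, Int.emod_eq_of_lt (by omega) (by omega)]

lemma offset_run_emod (hn : 2 ≤ n) (W : List Letter) (j : Fin n) :
    (run n W).offset j % n = (wordPerm n W (j + 1) : Fin n) := by
  induction W with
  | nil => simp [run, wordPerm, Config.offset, Fin.val_add]
  | cons x W ih =>
    rw [wordPerm_cons, Perm.mul_apply]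
    change ((run n W).step x).offset j % n = _
    set c := run n W
    set i := wordPerm n W (j + 1)
    cases x
    case right =>
      rw [Letter.toPerm_right_apply, coe_sub_one, ← ih, Int.emod_sub_emod]
      congr 1
      simp only [Config.step, Config.offset]
      ring
    case left =>
      rw [Letter.toPerm_left_apply, coe_add_one, ← ih, Int.emod_add_emod]
      congr 1
      simp only [Config.step, Config.offset]
      ring
    case swap =>
      have hone : ((1 : Fin n) : ℕ) = 1 := by rw [Fin.val_one', Nat.mod_eq_of_lt hn]
      rw [Config.offset_step_swap, (add_hop_ediv_and_emod hn _).2, hop, ih, Letter.toPerm,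
        swap_apply_def]
      simp only [apply_ite (Fin.val (n := n)), Fin.ext_iff, hone, Fin.val_zero]
      split_ifs <;> omega

lemma offset_run_emod_injective (hn : 2 ≤ n) (W : List Letter) :
    Function.Injective fun j ↦ (run n W).offset j % n := by
  intro i j h
  simp only [offset_run_emod hn, Nat.cast_inj] at h
  exact add_right_cancel ((wordPerm n W).injective (Fin.ext h))

end Run

/-! ### Passes and exchanges -/

section Floor

variable {n : ℕ}

lemma sub_ediv_eq (hn : 0 < n) (y z : ℤ) :
    (z - y) / n = z / n - y / n - if z % n < y % n then 1 else 0 := by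
  have hy0 := Int.emod_nonneg y (show (n : ℤ) ≠ 0 by omega)
  have hy1 := Int.emod_lt_of_pos y (show (0 : ℤ) < n by omega)
  have hz0 := Int.emod_nonneg z (show (n : ℤ) ≠ 0 by omega)
  have hz1 := Int.emod_lt_of_pos z (show (0 : ℤ) < n by omega)
  have hy := Int.emod_add_mul_ediv y n
  have hz := Int.emod_add_mul_ediv z n
  rw [Int.ediv_eq_iff_of_pos (by omega)]
  split_ifs <;> constructor <;> nlinarith

lemma sub_one_ediv (hn : 2 ≤ n) (q : ℤ) :
    (q - 1) / n = q / n - if q % n = 0 then 1 else 0 := by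
  have h0 := Int.emod_nonneg q (show (n : ℤ) ≠ 0 by omega)
  rw [sub_ediv_eq (by omega), Int.ediv_eq_zero_of_lt zero_le_one (by omega),
    Int.emod_eq_of_lt zero_le_one (by omega), sub_zero]
  congr 2
  exact propext (by omega)

end Floor

namespace Config

variable {n : ℕ} (c : Config n)

/-- The number of full turns by which a token is ahead of the head, rounded down. -/
def winding (j : Fin n) : ℤ := (c.pos j - c.head) / n

/-- The signed number of times the head has passed token `j`, up to a constant. A swap, which moves
a token across the head, does not change it. -/
def passes (j : Fin n) : ℤ := c.pos j - c.winding j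

/-- The number of full turns by which the second token of a pair is ahead of the first, rounded
down. It changes when the two tokens are exchanged. -/
def lead (p : Fin n × Fin n) : ℤ := (c.pos p.2 - c.pos p.1) / n

variable {c}

lemma winding_eq (hn : 2 ≤ n) (j : Fin n) :
    c.winding j = c.offset j / n - if c.offset j % n = 0 then 1 else 0 := by
  rw [← sub_one_ediv hn, winding, offset, add_sub_cancel_right]

lemma offset_emod_eq_one_iff (hn : 2 ≤ n) (j : Fin n) :
    c.offset j % n = 1 ↔ (c.pos j - c.head) % n = 0 := by
  rw [← add_sub_cancel_right (c.pos j - c.head) 1, ← Int.emod_eq_emod_iff_emod_sub_eq_zero,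
    Int.emod_eq_of_lt zero_le_one (by omega), offset]

lemma passes_step_right (hn : 2 ≤ n) (j : Fin n) :
    (c.step .right).passes j = c.passes j + if c.offset j % n = 1 then 1 else 0 := by
  simp only [passes, winding, step, sub_add_eq_sub_sub, sub_one_ediv hn,
    offset_emod_eq_one_iff hn]
  ring

lemma passes_step_left (hn : 2 ≤ n) (j : Fin n) :
    (c.step .left).passes j = c.passes j - if c.offset j % n = 0 then 1 else 0 := by
  have hwinding : (c.step .left).winding j = c.offset j / n := by
    rw [winding, step, offset, sub_sub_eq_add_sub, add_sub_right_comm]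
  rw [passes, passes, hwinding, winding_eq hn, step]
  ring

lemma passes_step_swap (hn : 2 ≤ n) (j : Fin n) : (c.step .swap).passes j = c.passes j := by
  obtain ⟨hdiv, hmod⟩ := add_hop_ediv_and_emod hn (c.offset j)
  rw [passes, passes, winding_eq hn, winding_eq hn, offset_step_swap, hdiv, hmod]
  simp only [step, hop]
  split_ifs <;> omega

lemma lead_eq (hn : 0 < n) (i j : Fin n) :
    c.lead (i, j) = c.offset j / n - c.offset i / n -
      if c.offset j % n < c.offset i % n then 1 else 0 := by
  rw [← sub_ediv_eq hn, lead, offset, offset]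
  ring_nf

lemma abs_lead_step_swap_sub_le (hn : 2 ≤ n) (i j : Fin n) :
    |(c.step .swap).lead (i, j) - c.lead (i, j)| ≤
      (if c.offset i % n = 0 ∧ c.offset j % n = 1 then 1 else 0) +
      (if c.offset i % n = 1 ∧ c.offset j % n = 0 then 1 else 0) := by
  obtain ⟨hdivi, hmodi⟩ := add_hop_ediv_and_emod hn (c.offset i)
  obtain ⟨hdivj, hmodj⟩ := add_hop_ediv_and_emod hn (c.offset j)
  rw [lead_eq (by omega), lead_eq (by omega), offset_step_swap, offset_step_swap, hdivi, hmodi,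
    hdivj, hmodj, abs_le]
  have hj := Int.emod_nonneg (c.offset j) (show (n : ℤ) ≠ 0 by omega)
  simp only [hop]
  constructor <;> split_ifs <;> omega

lemma two_mul_sum_abs_passes_add_sum_abs_lead_le (hn : 2 ≤ n)
    (hc : Function.Injective fun j ↦ c.offset j % n) (x : Letter) :
    2 * ∑ j, |(c.step x).passes j - c.passes j| +
      ∑ p ∈ univ.offDiag, |(c.step x).lead p - c.lead p| ≤ 2 := by
  have unique (r : ℤ) : ∑ j, (if c.offset j % n = r then 1 else 0 : ℤ) ≤ 1 :=
    sum_ite_le_one fun i _ j _ hi hj ↦ hc (hi.trans hj.symm)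
  cases x
  case right =>
    have hpasses (j : Fin n) : |(c.step .right).passes j - c.passes j| =
        if c.offset j % n = 1 then 1 else 0 := by
      rw [passes_step_right hn, add_sub_cancel_left]
      split_ifs <;> rfl
    have hlead (p : Fin n × Fin n) : (c.step .right).lead p = c.lead p := rfl
    simp only [hpasses, hlead, sub_self, abs_zero, sum_const_zero, add_zero]
    linarith [unique 1]
  case left =>
    have hpasses (j : Fin n) : |(c.step .left).passes j - c.passes j| =
        if c.offset j % n = 0 then 1 else 0 := by
      rw [passes_step_left hn, sub_sub_cancel_left]
      split_ifs <;> rfl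
    have hlead (p : Fin n × Fin n) : (c.step .left).lead p = c.lead p := rfl
    simp only [hpasses, hlead, sub_self, abs_zero, sum_const_zero, add_zero]
    linarith [unique 0]
  case swap =>
    have hpairs (r t : ℤ) : ∑ p ∈ univ.offDiag,
        (if c.offset p.1 % n = r ∧ c.offset p.2 % n = t then 1 else 0 : ℤ) ≤ 1 :=
      sum_ite_le_one fun p _ q _ hp hq ↦
        Prod.ext (hc (hp.1.trans hq.1.symm)) (hc (hp.2.trans hq.2.symm))
    simp only [passes_step_swap hn, sub_self, abs_zero, sum_const_zero, mul_zero, zero_add]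
    calc ∑ p ∈ univ.offDiag, |(c.step .swap).lead p - c.lead p|
      _ ≤ _ := sum_le_sum fun p _ ↦ abs_lead_step_swap_sub_le hn p.1 p.2
      _ ≤ 1 + 1 := by rw [sum_add_distrib]; exact add_le_add (hpairs 0 1) (hpairs 1 0)

end Config

/-- The total variation of a quantity along the run of a word. -/
def variation {n : ℕ} (φ : Config n → ℤ) : List Letter → ℤ
  | [] => 0
  | x :: W => |φ (run n (x :: W)) - φ (run n W)| + variation φ W

/-- The number of times the head passes token `j` along the run of a word. -/
def passCount {n : ℕ} (W : List Letter) (j : Fin n) : ℤ := variation (Config.passes · j) W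

/-- The number of times two tokens are exchanged along the run of a word. -/
def exchangeCount {n : ℕ} (W : List Letter) (p : Fin n × Fin n) : ℤ :=
  variation (Config.lead · p) W

section Variation

variable {n : ℕ} (φ : Config n → ℤ)

lemma variation_add_abs_sub_le (u v : List Letter) :
    variation φ v + |φ (run n (u ++ v)) - φ (run n v)| ≤ variation φ (u ++ v) := by
  induction u with
  | nil => simp
  | cons x u ih =>
    rw [List.cons_append, variation]
    linarith [abs_sub_le (φ (run n (x :: (u ++ v)))) (φ (run n (u ++ v))) (φ (run n v))]

lemma abs_sub_le_variation (W : List Letter) :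
    |φ (run n W) - φ (run n [])| ≤ variation φ W := by
  simpa [variation] using variation_add_abs_sub_le φ W []

lemma variation_nonneg (W : List Letter) : 0 ≤ variation φ W :=
  (abs_nonneg _).trans (abs_sub_le_variation φ W)

lemma abs_sub_add_sub_le_variation (u v : List Letter) :
    |(φ (run n v) - φ (run n [])) - (φ (run n (u ++ v)) - φ (run n v))| ≤
      variation φ (u ++ v) := by
  refine (abs_sub _ _).trans ?_
  linarith [variation_add_abs_sub_le φ u v, abs_sub_le_variation φ v]

lemma two_mul_sum_passCount_add_sum_exchangeCount_le [NeZero n] (hn : 2 ≤ n) (W : List Letter) :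
    2 * ∑ j : Fin n, passCount W j + ∑ p ∈ (univ : Finset (Fin n)).offDiag, exchangeCount W p ≤
      2 * W.length := by
  induction W with
  | nil => simp [passCount, exchangeCount, variation]
  | cons x W ih =>
    have h := Config.two_mul_sum_abs_passes_add_sum_abs_lead_le hn
      (offset_run_emod_injective hn W) x
    change 2 * ∑ j, |(run n (x :: W)).passes j - _| +
      ∑ p ∈ univ.offDiag, |(run n (x :: W)).lead p - _| ≤ 2 at h
    simp only [passCount, exchangeCount, variation, sum_add_distrib, List.length_cons] at ih ⊢
    push_cast
    linarith

end Variation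

/-! ### The final configuration -/

section Endpoint

variable {n : ℕ} {W : List Letter} {i j : Fin n}

lemma passes_run_nil (j : Fin n) : (run n []).passes j = j := by
  simp [run, Config.passes, Config.winding, Int.ediv_eq_zero_of_lt]

/-- The tokens which are in the end an even number of turns ahead of the head. -/
def evenTokens (n : ℕ) (W : List Letter) : Finset (Fin n) :=
  {j | Even ((run n W).winding j)}

lemma mem_evenTokens : j ∈ evenTokens n W ↔ Even ((run n W).winding j) := by
  simp [evenTokens]

variable [NeZero n]

lemma coe_neg_add_one (j : Fin n) : ((-(j + 1) : Fin n) : ℤ) = n - 1 - j := by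
  have h : ((j + 1 : Fin n) : ℕ) = (j + 1) % n := by simp [Fin.val_add]
  rw [Fin.val_neg', h]
  rcases eq_or_lt_of_le (Nat.succ_le_of_lt j.2) with hj | hj
  · rw [← Nat.succ_eq_add_one, hj, Nat.mod_self, Nat.sub_zero, Nat.mod_self]
    omega
  · rw [Nat.mod_eq_of_lt hj, Nat.mod_eq_of_lt (by omega)]
    omega

lemma pos_run_of_wordPerm_eq_reflection (hn : 2 ≤ n) (hW : wordPerm n W = reflection n)
    (j : Fin n) : (run n W).pos j = (run n W).head + (n - 1 - j) + n * (run n W).winding j := by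
  have hmod : ((run n W).pos j - (run n W).head) % n = n - 1 - j := by
    have h := offset_run_emod hn W j
    rw [hW, reflection_apply] at h
    rw [← coe_neg_add_one j, ← sub_sub_cancel_left (1 : Fin n) (j + 1), coe_sub_one,
      ← h, Int.emod_sub_emod, Config.offset, add_sub_cancel_right]
  have h := Int.emod_add_mul_ediv ((run n W).pos j - (run n W).head) n
  rw [hmod] at h
  rw [Config.winding]
  linarith

lemma passes_run_of_wordPerm_eq_reflection (hn : 2 ≤ n) (hW : wordPerm n W = reflection n)
    (j : Fin n) : (run n W).passes j =
      (run n W).head + (n - 1 - j) + (n - 1) * (run n W).winding j := by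
  rw [Config.passes, pos_run_of_wordPerm_eq_reflection hn hW]
  ring

lemma abs_le_passCount (hn : 2 ≤ n) (hW : wordPerm n W = reflection n) (j : Fin n) :
    |(run n W).head + (n - 1 - 2 * j) + (n - 1) * (run n W).winding j| ≤
      passCount W j := by
  refine le_of_eq_of_le ?_ (abs_sub_le_variation (Config.passes · j) W)
  rw [passes_run_of_wordPerm_eq_reflection hn hW, passes_run_nil]
  ring_nf

/-- In the end token `j` is ahead of token `i` by the difference of their windings, up to a turn in
the direction in which it did not start, so that an odd number of exchanges has taken place. -/
lemma one_le_exchangeCount (hn : 2 ≤ n) (hW : wordPerm n W = reflection n) (hij : i ≠ j)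
    (hparity : Even ((run n W).winding i) ↔ Even ((run n W).winding j)) :
    1 ≤ exchangeCount W (i, j) := by
  refine le_trans ?_ (abs_sub_le_variation (Config.lead · (i, j)) W)
  have hdiff : (run n W).lead (i, j) = (run n W).winding j - (run n W).winding i +
      (i - j : ℤ) / n := by
    rw [Config.lead, pos_run_of_wordPerm_eq_reflection hn hW,
      pos_run_of_wordPerm_eq_reflection hn hW, add_comm (_ - _),
      ← Int.add_mul_ediv_left _ _ (show (n : ℤ) ≠ 0 by omega)]
    ring_nf
  have hstart : (run n []).lead (i, j) = (j - i : ℤ) / n := rfl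
  have hfloor : (i - j : ℤ) / n - (j - i) / n = 1 ∨ (i - j : ℤ) / n - (j - i) / n = -1 := by
    have h := Fin.val_ne_of_ne hij
    have hself (k : Fin n) : (k : ℤ) / n = 0 ∧ (k : ℤ) % n = k :=
      ⟨Int.ediv_eq_zero_of_lt (by omega) (by omega), Int.emod_eq_of_lt (by omega) (by omega)⟩
    rw [sub_ediv_eq (by omega), sub_ediv_eq (by omega), (hself i).1, (hself i).2, (hself j).1,
      (hself j).2]
    split_ifs <;> omega
  apply Int.one_le_abs
  rw [hdiff, hstart]
  grind

lemma card_offDiag_evenTokens_add_le_two_mul_length (hn : 2 ≤ n)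
    (hW : wordPerm n W = reflection n) :
    (#(evenTokens n W).offDiag + #(evenTokens n W)ᶜ.offDiag : ℤ) +
      2 * ∑ j : Fin n, passCount W j ≤ 2 * W.length := by
  have hpairs := card_offDiag_add_card_offDiag_compl_le_sum (K := exchangeCount W)
    (evenTokens n W) (fun p ↦ variation_nonneg _ W) fun i j hij h ↦
      one_le_exchangeCount hn hW hij (by rwa [← mem_evenTokens, ← mem_evenTokens])
  linarith [two_mul_sum_passCount_add_sum_exchangeCount_le hn W]

end Endpoint

/-! ### Confined configurations -/

section Confinement

variable {n : ℕ}

/-- Every token is on the same side of the places `≡ M` as at the start. -/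
def Config.Confined (M : ℤ) (c : Config n) : Prop :=
  ∀ j, M - n ≤ c.pos j ∧ c.pos j < M + n ∧ (M ≤ c.pos j ↔ M ≤ j)

lemma Config.le_pos_step_swap_iff {c : Config n} {a : ℤ} (hn : 2 ≤ n) (ha : ¬(n : ℤ) ∣ a - c.head)
    (j : Fin n) : a ≤ (c.step .swap).pos j ↔ a ≤ c.pos j := by
  have ha0 : c.offset j % n = 0 → c.pos j ≠ a - 1 := fun h hj ↦
    ha (Int.dvd_of_emod_eq_zero (by rwa [Config.offset, hj, sub_right_comm, sub_add_cancel] at h))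
  have ha1 : c.offset j % n = 1 → c.pos j ≠ a := by
    rintro h rfl
    rw [Config.offset_emod_eq_one_iff hn] at h
    exact ha (Int.dvd_of_emod_eq_zero h)
  simp only [Config.step, hop]
  split_ifs <;> grind

lemma Config.Confined.step_swap {M : ℤ} {c : Config n} (hn : 2 ≤ n) (hc : c.Confined M)
    (h₁ : M - n < c.head) (h₂ : c.head < M) : (c.step .swap).Confined M := by
  have hlt : |M - c.head| < n := by rw [abs_lt]; omega
  have hM : ¬(n : ℤ) ∣ M - c.head := fun h ↦ by
    have := Int.eq_zero_of_abs_lt_dvd h hlt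
    omega
  have hlow : ¬(n : ℤ) ∣ M - n - c.head := by
    rwa [sub_right_comm, dvd_sub_self_right]
  have hhigh : ¬(n : ℤ) ∣ M + n - c.head := by
    rwa [add_sub_right_comm, dvd_add_self_right]
  intro j
  rw [← not_le, Config.le_pos_step_swap_iff hn hM, Config.le_pos_step_swap_iff hn hlow,
    Config.le_pos_step_swap_iff hn hhigh, not_le]
  exact hc j

/-- As long as the head has not visited a place `≡ M`, no token can cross one. -/
lemma confined_run_or_exists_visit {M : ℤ} (hM₀ : 0 < M) (hMn : M < n) (W : List Letter) :
    ((run n W).Confined M ∧ M - n < (run n W).head ∧ (run n W).head < M) ∨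
      ∃ u v, W = u ++ v ∧ (run n v).Confined M ∧
        ((run n v).head = M ∨ (run n v).head = M - n) := by
  induction W with
  | nil =>
    refine .inl ⟨fun j ↦ ?_, by simpa [run] using hMn, hM₀⟩
    change M - n ≤ (j : ℤ) ∧ (j : ℤ) < M + n ∧ (M ≤ (j : ℤ) ↔ M ≤ (j : ℤ))
    omega
  | cons x W ih =>
    rcases ih with ⟨hc, h₁, h₂⟩ | ⟨u, v, rfl, h⟩
    swap
    · exact .inr ⟨x :: u, v, rfl, h⟩
    cases x
    case right =>
      rcases eq_or_ne ((run n W).head + 1) M with hM | hM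
      · exact .inr ⟨[], .right :: W, rfl, hc, .inl hM⟩
      · exact .inl ⟨hc, show _ < (run n W).head + 1 by omega, show (run n W).head + 1 < _ by omega⟩
    case left =>
      rcases eq_or_ne ((run n W).head - 1) (M - n) with hM | hM
      · exact .inr ⟨[], .left :: W, rfl, hc, .inr hM⟩
      · exact .inl ⟨hc, show _ < (run n W).head - 1 by omega, show (run n W).head - 1 < _ by omega⟩
    case swap => exact .inl ⟨hc.step_swap (by omega) h₁ h₂, h₁, h₂⟩

lemma Config.Confined.exists_winding_eq {M : ℤ} {c : Config n} (hc : c.Confined M)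
    (hhead : c.head = M ∨ c.head = M - n) :
    ∃ κ : ℤ, ∀ j : Fin n, c.winding j = κ + if M ≤ j then 1 else 0 := by
  have hn (j : Fin n) : (0 : ℤ) < n := mod_cast j.pos
  rcases hhead with h | h
  · refine ⟨-1, fun j ↦ ?_⟩
    obtain ⟨h₁, h₂, h₃⟩ := hc j
    rw [Config.winding, h, Int.ediv_eq_iff_of_pos (hn j)]
    split_ifs <;> constructor <;> grind
  · refine ⟨0, fun j ↦ ?_⟩
    obtain ⟨h₁, h₂, h₃⟩ := hc j
    rw [Config.winding, h, Int.ediv_eq_iff_of_pos (hn j)]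
    split_ifs <;> constructor <;> grind

end Confinement

/-! ### Counting passes -/

section Bound

variable {n : ℕ} {u v W : List Letter} {j : Fin n}

lemma IsNearlyClosed.head_run (hb : IsNearlyClosed W) :
    (run n W).head = 0 ∨ (run n W).head = 1 := by
  rw [_root_.head_run]
  exact hb.imp_right And.left

variable [NeZero n]

lemma one_add_abs_le_passCount_zero (hn : 2 ≤ n) (hright : ∃ t, W = t ++ [.right]) :
    1 + |(run n W).passes 0 - 1| ≤ passCount W (0 : Fin n) := by
  obtain ⟨t, rfl⟩ := hright
  have hfirst : (run n [.right]).passes 0 = 1 := by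
    change ((run n []).step .right).passes 0 = 1
    rw [Config.passes_step_right hn, passes_run_nil]
    simp [run, Config.offset, Int.emod_eq_of_lt zero_le_one (show (1 : ℤ) < n by omega)]
  have hvar : variation (Config.passes (n := n) · 0) [.right] = 1 := by
    simp [variation, hfirst, passes_run_nil]
  have h := variation_add_abs_sub_le (Config.passes (n := n) · 0) t [.right]
  rwa [hvar, hfirst] at h

lemma IsNearlyClosed.sub_one_le_passCount_or_winding (hb : IsNearlyClosed W) (hn : 2 ≤ n)
    (hW : wordPerm n W = reflection n) (j : Fin n) :
    n - 1 ≤ passCount W j ∨ (run n W).winding j = 0 ∨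
      ((run n W).winding j = -1 ∧ 2 * j < n) ∨ ((run n W).winding j = 1 ∧ n ≤ 2 * (j : ℕ)) := by
  by_contra! ⟨hlight, h0, hneg, hpos⟩
  obtain ⟨hlo, hhi⟩ := abs_le.1 (abs_le_passCount hn hW j)
  have hpasses := passes_run_of_wordPerm_eq_reflection hn hW j
  have hhead := hb.head_run (n := n)
  set h := (run n W).head
  set V := (run n W).winding j
  obtain h1 | h1 | h1 | h1 : 2 ≤ V ∨ V = 1 ∨ V = -1 ∨ V ≤ -2 := by omega
  · have : (n - 1 : ℤ) * 2 ≤ (n - 1) * V := mul_le_mul_of_nonneg_left h1 (by omega)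
    omega
  · rw [h1] at hhi
    have := hpos h1
    omega
  · rw [h1] at hlo
    have := hneg h1
    omega
  · -- Only token `0` can be this light, and the first move, to the right, costs it one more pass.
    have hle : (n - 1 : ℤ) * V ≤ (n - 1) * -2 := mul_le_mul_of_nonneg_left h1 (by omega)
    obtain rfl : j = 0 := Fin.ext (by rw [Fin.val_zero]; omega)
    have hright : ∃ t, W = t ++ [.right] := by
      rcases hb with hb | hb
      · rw [← _root_.head_run (n := n)] at hb; omega
      · exact hb.2
    have := one_add_abs_le_passCount_zero hn hright
    have := neg_abs_le ((run n W).passes 0 - 1)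
    omega

lemma abs_two_mul_emod_add_le_passCount (hn : 2 ≤ n) (hW : wordPerm n (u ++ v) = reflection n)
    (j : Fin n) :
    |2 * (((run n v).pos j - (run n v).head) % n) + (2 * (run n v).head - (run n (u ++ v)).head -
      (n - 1) + (n - 1) * (2 * (run n v).winding j - (run n (u ++ v)).winding j))| ≤
      passCount (u ++ v) j := by
  refine le_of_eq_of_le ?_ (abs_sub_add_sub_le_variation (Config.passes · j) u v)
  rw [passes_run_of_wordPerm_eq_reflection hn hW, passes_run_nil]
  have h := Int.emod_add_mul_ediv ((run n v).pos j - (run n v).head) n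
  rw [← Config.winding] at h
  simp only [Config.passes]
  congr 1
  linear_combination 2 * h

lemma IsNearlyClosed.card_evenTokens_sq_sub_le (hb : IsNearlyClosed W) (hn : 2 ≤ n)
    (hW : wordPerm n W = reflection n) (hcard : #(evenTokens n W) ≤ (n - 1 : ℤ)) :
    (#(evenTokens n W) : ℤ) ^ 2 - (if Even ((run n W).head + (n - 1)) then 1 else 0) ≤
      2 * ∑ j ∈ evenTokens n W, passCount W j := by
  refine card_sq_sub_le_two_mul_sum_of_le_or_abs_le (f := fun j : Fin n ↦ -(j : ℤ)) hcard
    (fun i _ j _ hij ↦ Fin.ext (by simpa using hij)) fun j hj ↦ ?_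
  rw [mem_evenTokens] at hj
  refine (hb.sub_one_le_passCount_or_winding hn hW j).imp_right fun hV ↦ ?_
  have hV0 : (run n W).winding j = 0 := by grind
  refine le_of_eq_of_le ?_ (abs_le_passCount hn hW j)
  rw [hV0]
  ring_nf

lemma IsNearlyClosed.card_compl_evenTokens_sq_sub_le (hb : IsNearlyClosed (u ++ v)) (hn : 2 ≤ n)
    (hW : wordPerm n (u ++ v) = reflection n)
    (hcard : #(evenTokens n (u ++ v))ᶜ ≤ (n - 1 : ℤ)) {κ : ℤ}
    (hκ : ∀ j : Fin n, (run n v).winding j = κ + if n ≤ 2 * (j : ℕ) then 1 else 0) :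
    (#(evenTokens n (u ++ v))ᶜ : ℤ) ^ 2 - (if Even (run n (u ++ v)).head then 1 else 0) ≤
      2 * ∑ j ∈ (evenTokens n (u ++ v))ᶜ, passCount (u ++ v) j := by
  have hinj : Function.Injective fun j ↦ ((run n v).pos j - (run n v).head) % n := fun i j hij ↦
    offset_run_emod_injective hn v (Int.ModEq.add_right 1 hij)
  have hparity : Even (2 * (run n v).head - (run n (u ++ v)).head - (n - 1) +
      (n - 1) * (2 * κ + 1)) ↔ Even (run n (u ++ v)).head := by
    grind
  rw [← if_congr hparity rfl rfl]
  refine card_sq_sub_le_two_mul_sum_of_le_or_abs_le hcard hinj.injOn fun j hj ↦ ?_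
  rw [mem_compl, mem_evenTokens] at hj
  refine (hb.sub_one_le_passCount_or_winding hn hW j).imp_right fun hV ↦ ?_
  have hmid : 2 * (run n v).winding j - (run n (u ++ v)).winding j = 2 * κ + 1 := by
    rw [hκ]
    grind
  rw [← hmid]
  exact abs_two_mul_emod_add_le_passCount hn hW j

lemma IsNearlyClosed.card_evenTokens_mul_le_sum_passCount_of_winding_eq
    (hb : IsNearlyClosed (u ++ v)) (hn : 2 ≤ n) (hW : wordPerm n (u ++ v) = reflection n) {κ : ℤ}
    (hκ : ∀ j : Fin n, (run n v).winding j = κ + if n ≤ 2 * (j : ℕ) then 1 else 0) :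
    (#(evenTokens n (u ++ v)) * #(evenTokens n (u ++ v))ᶜ : ℤ) ≤
      ∑ j : Fin n, passCount (u ++ v) j := by
  have hsum : 0 ≤ ∑ j : Fin n, passCount (u ++ v) j := sum_nonneg fun j _ ↦ variation_nonneg _ _
  have hcard := card_add_card_compl (evenTokens n (u ++ v))
  rw [Fintype.card_fin] at hcard
  rcases Nat.eq_zero_or_pos #(evenTokens n (u ++ v)) with hE | hE
  · rwa [hE, Nat.cast_zero, zero_mul]
  rcases Nat.eq_zero_or_pos #(evenTokens n (u ++ v))ᶜ with hO | hO
  · rwa [hO, Nat.cast_zero, mul_zero]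
  have heven := hb.card_evenTokens_sq_sub_le hn hW (by omega)
  have hodd := hb.card_compl_evenTokens_sq_sub_le hn hW (by omega) hκ
  rw [← sum_add_sum_compl (evenTokens n (u ++ v))]
  set E := #(evenTokens n (u ++ v))
  set O := #(evenTokens n (u ++ v))ᶜ
  have hsq : 2 * (E * O : ℤ) + (if E = O then 0 else 1) ≤ (E : ℤ) ^ 2 + (O : ℤ) ^ 2 := by
    split_ifs with h
    · rw [h]; linarith
    · have := Int.one_le_abs (sub_ne_zero.2 (Nat.cast_injective.ne h : (E : ℤ) ≠ O))
      nlinarith [sq_abs (E - O : ℤ)]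
  have hparity : (if Even ((run n (u ++ v)).head + (n - 1)) then 1 else 0 : ℤ) +
      (if Even (run n (u ++ v)).head then 1 else 0) ≤ 1 + if E = O then 0 else 1 := by
    split_ifs <;> grind
  linarith

lemma Config.Confined.winding_run (hn : 2 ≤ n) (hW : wordPerm n W = reflection n)
    (hhead : (run n W).head = 0 ∨ (run n W).head = 1) (hc : (run n W).Confined ((n + 1) / 2))
    (j : Fin n) : (run n W).winding j = -1 ∨ (run n W).winding j = 1 ∨
      (run n W).winding j = 0 ∧ 2 * (j : ℤ) = n - 1 + (run n W).head := by
  obtain ⟨h₁, h₂, h₃⟩ := hc j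
  rw [pos_run_of_wordPerm_eq_reflection hn hW] at h₁ h₂ h₃
  generalize (run n W).winding j = V at *
  obtain hV | rfl | rfl | rfl | hV : 2 ≤ V ∨ V = 1 ∨ V = 0 ∨ V = -1 ∨ V ≤ -2 := by omega
  · have : (n : ℤ) * 2 ≤ n * V := mul_le_mul_of_nonneg_left hV (by omega)
    omega
  · exact .inr (.inl rfl)
  · exact .inr (.inr ⟨rfl, by omega⟩)
  · exact .inl rfl
  · have : (n : ℤ) * V ≤ n * -2 := mul_le_mul_of_nonneg_left hV (by omega)
    omega

lemma two_le_passCount_of_head_eq_zero (hn : 2 ≤ n) (hW : wordPerm n W = reflection n)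
    (hhead : (run n W).head = 0)
    (hV : (run n W).winding j = -1 ∨ (run n W).winding j = 1) (hj₀ : j ≠ 0) (hj₁ : j ≠ -1) :
    2 ≤ passCount W j := by
  have h₀ : (j : ℕ) ≠ 0 := fun h ↦ hj₀ (Fin.ext (by simpa using h))
  have h₁ : (j : ℤ) ≠ n - 1 := fun h ↦ hj₁ <| Fin.ext <| by
    have := coe_neg_add_one (0 : Fin n)
    rw [zero_add, Fin.val_zero] at this
    omega
  have h := abs_le_passCount hn hW j
  rw [hhead, abs_le] at h
  rcases hV with hV | hV <;> rw [hV] at h <;> omega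

lemma sub_one_le_sum_passCount_of_head_eq_zero (hn : 4 ≤ n) (hW : wordPerm n W = reflection n)
    (hhead : (run n W).head = 0) {e : Fin n} (he : 2 * (e : ℤ) = n - 1)
    (hV : ∀ j ≠ e, (run n W).winding j = -1 ∨ (run n W).winding j = 1) :
    n - 1 ≤ ∑ j : Fin n, passCount W j := by
  have htwo : ∀ j ∈ ({0, e, -1} : Finset (Fin n))ᶜ, 2 ≤ passCount W j := by
    intro j hj
    simp only [mem_compl, mem_insert, mem_singleton, not_or] at hj
    exact two_le_passCount_of_head_eq_zero (by omega) hW hhead (hV j hj.2.1) hj.1 hj.2.2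
  have hcard := card_add_card_compl ({0, e, -1} : Finset (Fin n))
  rw [Fintype.card_fin] at hcard
  have := card_le_three (a := (0 : Fin n)) (b := e) (c := -1)
  calc (n - 1 : ℤ) ≤ #({0, e, -1} : Finset (Fin n))ᶜ • 2 := by rw [nsmul_eq_mul]; omega
    _ ≤ ∑ j ∈ ({0, e, -1} : Finset (Fin n))ᶜ, passCount W j := card_nsmul_le_sum _ _ _ htwo
    _ ≤ ∑ j, passCount W j := sum_le_univ_sum_of_nonneg fun j ↦ variation_nonneg _ _

lemma card_compl_evenTokens_le_sum_passCount_of_head_eq_one (hn : 2 ≤ n)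
    (hW : wordPerm n W = reflection n) (hhead : (run n W).head = 1) (heven : Even n) :
    (#(evenTokens n W)ᶜ : ℤ) ≤ ∑ j : Fin n, passCount W j := by
  have hone : ∀ j ∈ (evenTokens n W)ᶜ, 1 ≤ passCount W j := by
    intro j hj
    rw [mem_compl, mem_evenTokens] at hj
    refine (Int.one_le_abs fun h0 ↦ ?_).trans (abs_le_passCount hn hW j)
    obtain ⟨k, hk⟩ := Int.not_even_iff_odd.1 hj
    obtain ⟨m, hm⟩ : Even (n : ℤ) := mod_cast heven
    rw [hhead, hk, hm] at h0
    ring_nf at h0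
    omega
  calc (#(evenTokens n W)ᶜ : ℤ) = #(evenTokens n W)ᶜ • 1 := by simp
    _ ≤ ∑ j ∈ (evenTokens n W)ᶜ, passCount W j := card_nsmul_le_sum _ _ _ hone
    _ ≤ ∑ j, passCount W j := sum_le_univ_sum_of_nonneg fun j ↦ variation_nonneg _ _

lemma IsNearlyClosed.card_evenTokens_mul_le_sum_passCount_of_confined
    (hb : IsNearlyClosed W) (hn : 4 ≤ n) (hW : wordPerm n W = reflection n)
    (hc : (run n W).Confined ((n + 1) / 2)) :
    (#(evenTokens n W) * #(evenTokens n W)ᶜ : ℤ) ≤ ∑ j : Fin n, passCount W j := by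
  have hwinding := hc.winding_run (by omega) hW hb.head_run
  have heven {j} (hj : j ∈ evenTokens n W) : 2 * (j : ℤ) = n - 1 + (run n W).head := by
    rw [mem_evenTokens] at hj
    grind
  rcases (evenTokens n W).eq_empty_or_nonempty with hE | ⟨e, he⟩
  · rw [hE, card_empty, Nat.cast_zero, zero_mul]
    exact sum_nonneg fun j _ ↦ variation_nonneg _ _
  have hone : #(evenTokens n W) = 1 := card_eq_one.2 ⟨e, eq_singleton_iff_unique_mem.2
    ⟨he, fun j hj ↦ Fin.ext (by have := heven he; have := heven hj; omega)⟩⟩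
  rw [hone, Nat.cast_one, one_mul]
  have hmid := heven he
  rcases hb.head_run (n := n) with hhead | hhead
  · rw [hhead, add_zero] at hmid
    have hcompl : (#(evenTokens n W)ᶜ : ℤ) = n - 1 := by
      rw [card_compl, hone, Fintype.card_fin]
      omega
    rw [hcompl]
    refine sub_one_le_sum_passCount_of_head_eq_zero hn hW hhead hmid fun j hj ↦ ?_
    have := Fin.val_ne_of_ne hj
    have := hwinding j
    omega
  · refine card_compl_evenTokens_le_sum_passCount_of_head_eq_one (by omega) hW hhead ?_
    grind

lemma IsNearlyClosed.card_evenTokens_mul_le_sum_passCount (hb : IsNearlyClosed W) (hn : 4 ≤ n)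
    (hW : wordPerm n W = reflection n) :
    (#(evenTokens n W) * #(evenTokens n W)ᶜ : ℤ) ≤ ∑ j : Fin n, passCount W j := by
  rcases confined_run_or_exists_visit (n := n) (M := (n + 1) / 2) (by omega) (by omega) W with
    h | ⟨u, v, rfl, hc, hhead⟩
  · exact hb.card_evenTokens_mul_le_sum_passCount_of_confined hn hW h.1
  · obtain ⟨κ, hκ⟩ := hc.exists_winding_eq hhead
    exact hb.card_evenTokens_mul_le_sum_passCount_of_winding_eq (by omega) hW fun j ↦
      (hκ j).trans (by congr 2; exact propext (by omega))

theorem mul_sub_one_div_two_le_length (hn : 4 ≤ n) (hW : wordPerm n W = reflection n) :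
    n * (n - 1) / 2 ≤ W.length := by
  obtain ⟨W', hlen, hW', hb⟩ := exists_isNearlyClosed_wordPerm_eq_reflection hW
  have hpairs := card_offDiag_evenTokens_add_le_two_mul_length (by omega) hW'
  have hcross := hb.card_evenTokens_mul_le_sum_passCount hn hW'
  have hcard : (#(evenTokens n W') + #(evenTokens n W')ᶜ : ℤ) = n := by
    exact_mod_cast (card_add_card_compl _).trans (Fintype.card_fin n)
  rw [cast_card_offDiag, cast_card_offDiag] at hpairs
  have htotal : (n * (n - 1) : ℤ) ≤ 2 * W.length := by
    rw [← hcard, ← hlen]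
    linarith
  have htotal' : n * (n - 1) ≤ 2 * W.length := by
    zify [show 1 ≤ n by omega]
    exact htotal
  omega

end Bound

/-- For `n ≥ 4`, with `s = [n n-1 … 1]` and `r = (1 2 … n)`, the word
metric with respect to `{(1 2), r, r⁻¹}` satisfies `dist(s r^(n-2), 1) ≥ n(n-1)/2`;
in particular the diameter of the corresponding Cayley graph of `S_n` is at least
`n(n-1)/2`. -/
theorem stmt10 (n : ℕ) (hn : 4 ≤ n) :
    (∀ l : List (Equiv.Perm (Fin n)), (∀ x ∈ l, x ∈ gens n (by omega)) →
      l.prod = ((Fin.revPerm : Equiv.Perm (Fin n)) * (finRotate n) ^ (n - 2))⁻¹ →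
      n * (n - 1) / 2 ≤ l.length) ∧
    (∃ π σ : Equiv.Perm (Fin n),
      ∀ l : List (Equiv.Perm (Fin n)), (∀ x ∈ l, x ∈ gens n (by omega)) →
        l.prod = π⁻¹ * σ → n * (n - 1) / 2 ≤ l.length) := by
  have : NeZero n := ⟨by omega⟩
  have hlength (l : List (Perm (Fin n))) (hl : ∀ x ∈ l, x ∈ gens n (by omega))
      (hprod : l.prod = (Fin.revPerm * finRotate n ^ (n - 2))⁻¹) : n * (n - 1) / 2 ≤ l.length := by
    obtain ⟨W, hlen, hW⟩ := exists_wordPerm_eq_prod (by omega) hl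
    rw [← hlen]
    refine mul_sub_one_div_two_le_length hn ?_
    rw [hW, hprod, revPerm_mul_finRotate_pow (by omega), reflection_inv]
  exact ⟨hlength, Fin.revPerm * finRotate n ^ (n - 2), 1, fun l hl hprod ↦
    hlength l hl (by rw [hprod, mul_one])⟩
end

section
/- Let n ≥ 4, s = [n n-1 … 1], r = (1 2 … n), δ = (1 2) in S_n, and dist the word metric with respect to {δ, r, r^{-1}}. Then dist(s r^{n-1}, 1) = ⌈n/2⌉(⌈n/2⌉-1) - 1 + ⌊n/2⌋(⌊n/2⌋-1) - 1 + ⌊n/2⌋ + 1. -/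
/-! Up to one letter `r`, the target `z ↦ -z` is the reflection `z ↦ 1 - z`, which commutes with `δ`
and conjugates `r` to `r⁻¹`. Hence a word `u ++ v` for this reflection may be replaced by
`v⁻ ++ u`, where `v⁻` has its letters inverted, without changing its length.

Lifted to the integers, such a word sends `i` to `1 - i + n * q`; color the residue of `i` by the
parity of `q`. Two occupants of the same color have lifts that change their order, so some `δ`
exchanges them: color classes of sizes `a` and `b` force `a.choose 2 + b.choose 2` letters `δ`.
Each rotation carries the whole circle along except for one occupant, once the positions `0` and `1`
are identified. If `0` and `1` have different colors, the occupants of one color are delayed by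
pairwise distinct amounts of the same parity, which forces `a * b` rotations, and the total is
`n.choose 2`. If at some stage the occupants of `0` and `1` have different colors, a replacement as
above reaches this case. Otherwise all exchanged occupants have the color of `0`, so at most one
position has the other color; then nearly all pairs are exchanged by letters `δ`, and the delays
account for the rest.

A word of minimal length for `z ↦ -z` reverses two complementary blocks of nearly equal size. -/

/-- The three generators `δ`, `r`, `r⁻¹`, as letters of words. -/
inductive Letter_s11
  | δ
  | r
  | rInv
  deriving DecidableEq

namespace Letter_s11

/-- The formal inverse of a letter. -/
def inv : Letter_s11 → Letter_s11
  | δ => δ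
  | r => rInv
  | rInv => r

/-- The action of a letter on the `n` positions, labelled by residues: the paper's position `i` is
the residue `i - 1`. -/
def residue (n : ℕ) : Letter_s11 → Equiv.Perm (ZMod n)
  | δ => Equiv.swap 0 1
  | r => Equiv.addRight 1
  | rInv => Equiv.subRight 1

end Letter_s11

/-- The permutation of the `n` positions spelled by a word; the last letter acts first. -/
def residueWord (n : ℕ) (w : List Letter_s11) : Equiv.Perm (ZMod n) :=
  (w.map (Letter_s11.residue n)).prod

section Residues

variable {n : ℕ}

@[simp]
theorem residueWord_nil : residueWord n [] = 1 := rfl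

@[simp]
theorem residueWord_cons (a : Letter_s11) (w : List Letter_s11) (z : ZMod n) :
    residueWord n (a :: w) z = a.residue n (residueWord n w z) := by
  simp [residueWord]

@[simp]
theorem residueWord_append (u v : List Letter_s11) (z : ZMod n) :
    residueWord n (u ++ v) z = residueWord n u (residueWord n v z) := by
  simp [residueWord]

theorem Letter_s11.residue_inv_one_sub (a : Letter_s11) (z : ZMod n) :
    a.inv.residue n (1 - z) = 1 - a.residue n z := by
  cases a with
  | δ => simp only [inv, residue, Equiv.swap_apply_def]; grind
  | r => simp only [inv, residue, Equiv.subRight_apply, Equiv.coe_addRight]; ring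
  | rInv => simp only [inv, residue, Equiv.subRight_apply, Equiv.coe_addRight]; ring

theorem residueWord_map_inv_one_sub (w : List Letter_s11) (z : ZMod n) :
    residueWord n (w.map Letter_s11.inv) (1 - z) = 1 - residueWord n w z := by
  induction w with
  | nil => simp
  | cons a w ih => simp [ih, Letter_s11.residue_inv_one_sub]

theorem residueWord_map_inv_eq {w : List Letter_s11} {x y z : ZMod n} (hxy : residueWord n w x = y)
    (hz : z = 1 - x) : residueWord n (w.map Letter_s11.inv) z = 1 - y := by
  rw [hz, residueWord_map_inv_one_sub, hxy]

end Residues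

section AffineLift

variable (n : ℕ) [Fact (1 < n)]

/-- The lift of the transposition `δ` to the integers: it exchanges `n * q` and `n * q + 1` for
every `q`. -/
def affineSwap : Equiv.Perm ℤ :=
  Function.Involutive.toPerm
    (fun x ↦ if (x : ZMod n) = 0 then x + 1 else if (x : ZMod n) = 1 then x - 1 else x)
    (fun x ↦ by
      by_cases h₀ : (x : ZMod n) = 0
      · simp [h₀]
      · by_cases h₁ : (x : ZMod n) = 1 <;> simp [h₀, h₁])

/-- The lift of the action of a letter to the integers. -/
def Letter_s11.affine : Letter_s11 → Equiv.Perm ℤ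
  | δ => affineSwap n
  | r => Equiv.addRight 1
  | rInv => Equiv.subRight 1

/-- The lift of the action of a word to the integers. Unlike `residueWord`, it records how often
each position is carried around the circle. -/
def affineWord (w : List Letter_s11) : Equiv.Perm ℤ :=
  (w.map (Letter_s11.affine n)).prod

variable {n}

theorem affineSwap_apply (x : ℤ) :
    affineSwap n x =
      if (x : ZMod n) = 0 then x + 1 else if (x : ZMod n) = 1 then x - 1 else x :=
  rfl

@[simp]
theorem affineWord_nil (x : ℤ) : affineWord n [] x = x := rfl

@[simp]
theorem affineWord_cons (a : Letter_s11) (w : List Letter_s11) (x : ℤ) :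
    affineWord n (a :: w) x = a.affine n (affineWord n w x) := by
  simp [affineWord]

@[simp]
theorem affineWord_append (u v : List Letter_s11) (x : ℤ) :
    affineWord n (u ++ v) x = affineWord n u (affineWord n v x) := by
  simp [affineWord]

theorem Letter_s11.intCast_affine (a : Letter_s11) (x : ℤ) :
    (a.affine n x : ZMod n) = a.residue n x := by
  cases a with
  | δ =>
    simp only [affine, residue, affineSwap_apply, Equiv.swap_apply_def]
    split_ifs with h₀ h₁ <;> simp [*]
  | r => simp [affine, residue]
  | rInv => simp [affine, residue]

theorem intCast_affineWord (w : List Letter_s11) (x : ℤ) :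
    (affineWord n w x : ZMod n) = residueWord n w x := by
  induction w with
  | nil => simp
  | cons a w ih => simp [Letter_s11.intCast_affine, ih]

theorem Letter_s11.affine_add_mul (a : Letter_s11) (x q : ℤ) :
    a.affine n (x + n * q) = a.affine n x + n * q := by
  cases a with
  | δ =>
    have hcast : ((x + n * q : ℤ) : ZMod n) = x := by simp
    simp only [affine, affineSwap_apply, hcast]
    split_ifs <;> ring
  | r => simp only [affine, Equiv.coe_addRight]; ring
  | rInv => simp only [affine, Equiv.subRight_apply]; ring

theorem affineWord_add_mul (w : List Letter_s11) (x q : ℤ) :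
    affineWord n w (x + n * q) = affineWord n w x + n * q := by
  induction w with
  | nil => simp
  | cons a w ih => simp [ih, Letter_s11.affine_add_mul]

theorem Letter_s11.affine_inv_one_sub (a : Letter_s11) (x : ℤ) :
    a.inv.affine n (1 - x) = 1 - a.affine n x := by
  cases a with
  | δ =>
    simp only [inv, affine, affineSwap_apply, Int.cast_sub, Int.cast_one, sub_eq_zero,
      sub_eq_self, eq_comm (a := (1 : ZMod n))]
    split_ifs <;> grind [one_ne_zero (α := ZMod n)]
  | r => simp only [inv, affine, Equiv.subRight_apply, Equiv.coe_addRight]; ring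
  | rInv => simp only [inv, affine, Equiv.subRight_apply, Equiv.coe_addRight]; ring

theorem affineWord_map_inv_one_sub (w : List Letter_s11) (x : ℤ) :
    affineWord n (w.map Letter_s11.inv) (1 - x) = 1 - affineWord n w x := by
  induction w with
  | nil => simp
  | cons a w ih => simp [ih, Letter_s11.affine_inv_one_sub]

end AffineLift

section SwappedPairs

variable {n : ℕ}

/-- The pairs of starting positions whose occupants are exchanged by some letter `δ` of the word. -/
def swappedPairs (n : ℕ) : List Letter_s11 → Finset (Sym2 (ZMod n))
  | [] => ∅
  | .δ :: w => insert s((residueWord n w).symm 0, (residueWord n w).symm 1) (swappedPairs n w)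
  | .r :: w => swappedPairs n w
  | .rInv :: w => swappedPairs n w

theorem swappedPairs_subset_cons (a : Letter_s11) (w : List Letter_s11) :
    swappedPairs n w ⊆ swappedPairs n (a :: w) := by
  cases a with
  | δ => exact Finset.subset_insert _ _
  | r => rfl
  | rInv => rfl

theorem card_swappedPairs_le (w : List Letter_s11) : (swappedPairs n w).card ≤ w.count .δ := by
  induction w with
  | nil => rfl
  | cons a w ih =>
    cases a with
    | δ =>
      rw [List.count_cons_self]
      exact (Finset.card_insert_le _ _).trans (Nat.succ_le_succ ih)
    | r => simpa [swappedPairs] using ih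
    | rInv => simpa [swappedPairs] using ih

variable [Fact (1 < n)]

theorem Letter_s11.eq_δ_of_affine_lt {a : Letter_s11} {x y : ℤ} (hxy : x < y)
    (ha : a.affine n y < a.affine n x) : a = δ ∧ (x : ZMod n) = 0 ∧ y = x + 1 := by
  cases a with
  | δ =>
    refine ⟨rfl, ?_⟩
    by_cases hy : y = x + 1
    · refine ⟨?_, hy⟩
      subst hy
      simp only [affine, affineSwap_apply, Int.cast_add, Int.cast_one, add_eq_right] at ha
      grind
    · simp only [affine, affineSwap_apply] at ha
      grind
  | r => simp only [affine, Equiv.coe_addRight] at ha; omega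
  | rInv => simp only [affine, Equiv.subRight_apply] at ha; omega

theorem mem_swappedPairs_of_affineWord_lt {w : List Letter_s11} {i j : ℤ} (hij : i < j)
    (hw : affineWord n w j < affineWord n w i) :
    s((i : ZMod n), (j : ZMod n)) ∈ swappedPairs n w := by
  induction w with
  | nil => exact absurd hw (by simpa using hij.le)
  | cons a w ih =>
    obtain hlt | hgt := ((affineWord n w).injective.ne hij.ne').lt_or_gt
    · exact swappedPairs_subset_cons a w (ih hlt)
    · rw [affineWord_cons, affineWord_cons] at hw
      obtain ⟨rfl, hi, hj⟩ := Letter_s11.eq_δ_of_affine_lt hgt hw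
      have hj' : (affineWord n w j : ZMod n) = 1 := by rw [hj, Int.cast_add, hi]; simp
      rw [intCast_affineWord, ← Equiv.eq_symm_apply] at hi hj'
      rw [hi, hj']
      exact Finset.mem_insert_self _ _

end SwappedPairs

section Colors

variable {n : ℕ}

/-- A word is reflecting if it spells the reflection exchanging the positions `0` and `1`. Unlike
the target `z ↦ -z`, this reflection commutes with `δ`. -/
def IsReflecting (n : ℕ) (w : List Letter_s11) : Prop :=
  ∀ z : ZMod n, residueWord n w z = 1 - z

theorem IsReflecting.twist {u v : List Letter_s11} (h : IsReflecting n (u ++ v)) :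
    IsReflecting n (v.map Letter_s11.inv ++ u) := by
  intro z
  obtain ⟨y, rfl⟩ := (residueWord n v).surjective z
  rw [residueWord_append, ← residueWord_append u v, h, residueWord_map_inv_one_sub]

variable [Fact (1 < n)]

/-- The label of the integer `i`: the `q` for which a reflecting word carries `i` to
`1 - i + n * q`. -/
def label (n : ℕ) [Fact (1 < n)] (w : List Letter_s11) (i : ℤ) : ℤ :=
  (affineWord n w i + i - 1) / n

/-- The parity of the label, which depends only on the residue. -/
def color (n : ℕ) [Fact (1 < n)] (w : List Letter_s11) (z : ZMod n) : ZMod 2 :=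
  label n w z.val

theorem label_add_mul (w : List Letter_s11) (i q : ℤ) :
    label n w (i + n * q) = label n w i + 2 * q := by
  have hn : (n : ℤ) ≠ 0 := by exact_mod_cast NeZero.ne n
  rw [label, label, affineWord_add_mul, ← Int.add_mul_ediv_left _ _ hn]
  ring_nf

theorem color_intCast (w : List Letter_s11) (i : ℤ) : color n w (i : ZMod n) = label n w i := by
  obtain ⟨q, hq⟩ : ∃ q, i = (i : ZMod n).val + n * q :=
    ⟨i / n, by rw [ZMod.val_intCast, Int.emod_add_mul_ediv]⟩
  conv_rhs => rw [hq, label_add_mul]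
  rw [color]
  push_cast
  rw [show (2 : ZMod 2) = 0 from rfl, zero_mul, add_zero]

theorem IsReflecting.affineWord_eq {w : List Letter_s11} (hw : IsReflecting n w) (i : ℤ) :
    affineWord n w i = 1 - i + n * label n w i := by
  have hdvd : (n : ℤ) ∣ affineWord n w i + i - 1 := by
    rw [← ZMod.intCast_zmod_eq_zero_iff_dvd]
    push_cast
    rw [intCast_affineWord, hw]
    ring
  rw [label, Int.mul_ediv_cancel' hdvd]
  ring

theorem IsReflecting.label_twist {u v : List Letter_s11} (h : IsReflecting n (u ++ v)) (i : ℤ) :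
    label n (v.map Letter_s11.inv ++ u) (affineWord n v i) = label n (u ++ v) i := by
  have hi := h.affineWord_eq i
  have hsum : affineWord n (v.map Letter_s11.inv ++ u) (affineWord n v i) + affineWord n v i =
      affineWord n (u ++ v) i + i := by
    rw [affineWord_append, ← affineWord_append u v, hi,
      show 1 - i + n * label n (u ++ v) i = 1 - (i + n * -label n (u ++ v) i) by ring,
      affineWord_map_inv_one_sub, affineWord_add_mul]
    ring
  rw [label, hsum, label]

theorem IsReflecting.color_twist {u v : List Letter_s11} (h : IsReflecting n (u ++ v)) (z : ZMod n) :
    color n (v.map Letter_s11.inv ++ u) (residueWord n v z) = color n (u ++ v) z := by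
  obtain ⟨i, rfl⟩ := ZMod.intCast_surjective z
  rw [← intCast_affineWord, color_intCast, color_intCast, h.label_twist]

theorem IsReflecting.mem_swappedPairs {w : List Letter_s11} (hw : IsReflecting n w) {z z' : ZMod n}
    (hne : z ≠ z') (hcolor : color n w z = color n w z') : s(z, z') ∈ swappedPairs n w := by
  obtain ⟨i, rfl⟩ := ZMod.intCast_surjective z
  obtain ⟨j, rfl⟩ := ZMod.intCast_surjective z'
  rw [color_intCast, color_intCast, ZMod.intCast_eq_intCast_iff_dvd_sub] at hcolor
  obtain ⟨q, hq⟩ := hcolor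
  obtain ⟨k, hk, hlabel⟩ : ∃ k : ℤ, (k : ZMod n) = j ∧ label n w k = label n w i :=
    ⟨j + n * -q, by simp, by rw [label_add_mul]; push_cast at hq; linarith⟩
  rw [← hk] at hne ⊢
  have hi := hw.affineWord_eq i
  have hj := hw.affineWord_eq k
  rw [hlabel] at hj
  obtain hlt | hgt := (ne_of_apply_ne _ hne).lt_or_gt
  · exact mem_swappedPairs_of_affineWord_lt hlt (by linarith)
  · rw [Sym2.eq_swap]
    exact mem_swappedPairs_of_affineWord_lt hgt (by linarith)

/-- The positions of the same color as the position `0`. -/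
def colorClass (n : ℕ) [Fact (1 < n)] (w : List Letter_s11) : Finset (ZMod n) :=
  {z | color n w z = color n w 0}

theorem mem_colorClass {w : List Letter_s11} {z : ZMod n} :
    z ∈ colorClass n w ↔ color n w z = color n w 0 := by
  simp [colorClass]

theorem color_eq_color_of_notMem {w : List Letter_s11} {z z' : ZMod n} (hz : z ∉ colorClass n w)
    (hz' : z' ∉ colorClass n w) : color n w z = color n w z' := by
  rw [mem_colorClass] at hz hz'
  revert hz hz'
  generalize color n w z = a, color n w z' = b, color n w 0 = c
  decide +revert

/-- A set of positions is monochromatic if its members have the same color. -/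
def IsMonochromatic (n : ℕ) [Fact (1 < n)] (w : List Letter_s11) (s : Finset (ZMod n)) : Prop :=
  ∀ z ∈ s, ∀ z' ∈ s, color n w z = color n w z'

theorem isMonochromatic_colorClass (w : List Letter_s11) : IsMonochromatic n w (colorClass n w) :=
  fun _ hz _ hz' ↦ (mem_colorClass.mp hz).trans (mem_colorClass.mp hz').symm

theorem isMonochromatic_compl_colorClass (w : List Letter_s11) :
    IsMonochromatic n w (colorClass n w)ᶜ :=
  fun _ hz _ hz' ↦ color_eq_color_of_notMem (Finset.mem_compl.mp hz) (Finset.mem_compl.mp hz')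

theorem IsMonochromatic.image_offDiag_subset {w : List Letter_s11} (hw : IsReflecting n w)
    {s : Finset (ZMod n)} (hs : IsMonochromatic n w s) :
    s.offDiag.image Sym2.mk.uncurry ⊆ swappedPairs n w := by
  rintro _ hp
  obtain ⟨⟨z, z'⟩, hz, rfl⟩ := Finset.mem_image.mp hp
  obtain ⟨hz, hz', hne⟩ := Finset.mem_offDiag.mp hz
  exact hw.mem_swappedPairs hne (hs z hz z' hz')

theorem IsReflecting.choose_two_add_choose_two_le {w : List Letter_s11} (hw : IsReflecting n w) :
    (colorClass n w).card.choose 2 + (colorClass n w)ᶜ.card.choose 2 ≤ w.count .δ := by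
  rw [← Sym2.card_image_offDiag, ← Sym2.card_image_offDiag, ← Finset.card_union_of_disjoint]
  · refine (Finset.card_le_card (Finset.union_subset ?_ ?_)).trans (card_swappedPairs_le w)
    · exact (isMonochromatic_colorClass w).image_offDiag_subset hw
    · exact (isMonochromatic_compl_colorClass w).image_offDiag_subset hw
  · rw [Finset.disjoint_left]
    simp only [Finset.mem_image, Finset.mem_offDiag, Prod.exists, Finset.mem_compl]
    rintro _ ⟨a, b, ⟨ha, hb, -⟩, rfl⟩ ⟨c, d, ⟨hc, -, -⟩, heq⟩
    grind [Sym2.eq_iff]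

end Colors

section Collapse

variable {n : ℕ}

/-- The image of the integer `x` when `n * q` and `n * q + 1` are identified for every `q`, so that
a full turn of the circle consists of `n - 1` steps. -/
def collapse (n : ℕ) (x : ℤ) : ℤ :=
  x - (x - 1) / n

theorem collapse_add_mul [NeZero n] (x q : ℤ) :
    collapse n (x + n * q) = collapse n x + (n - 1) * q := by
  have hn : (n : ℤ) ≠ 0 := by exact_mod_cast NeZero.ne n
  rw [collapse, collapse, show x + n * q - 1 = x - 1 + n * q by ring,
    Int.add_mul_ediv_left _ _ hn]
  ring

theorem ediv_sub_sub_one_ediv [NeZero n] (x : ℤ) :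
    x / n - (x - 1) / n = if (x : ZMod n) = 0 then 1 else 0 := by
  have hn : (0 : ℤ) < n := by exact_mod_cast NeZero.pos n
  have hx : x - 1 = x % n - 1 + n * (x / n) := by linarith [Int.emod_add_mul_ediv x n]
  have hlt := Int.emod_lt_of_pos x hn
  have hnonneg := Int.emod_nonneg x hn.ne'
  have hzero : (x : ZMod n) = 0 ↔ x % n = 0 := by
    rw [ZMod.intCast_zmod_eq_zero_iff_dvd, Int.dvd_iff_emod_eq_zero]
  conv_lhs => rw [hx, Int.add_mul_ediv_left _ _ hn.ne']
  simp only [hzero]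
  split_ifs with h
  · rw [h, zero_sub, Int.neg_one_ediv, Int.sign_eq_one_of_pos hn]
    ring
  · rw [Int.ediv_eq_zero_of_lt (a := x % n - 1) (by omega) (by omega)]
    ring

theorem collapse_add_one [NeZero n] (x : ℤ) :
    collapse n (x + 1) = collapse n x + if (x : ZMod n) = 0 then 0 else 1 := by
  have h := ediv_sub_sub_one_ediv (n := n) x
  rw [collapse, collapse, add_sub_cancel_right]
  split_ifs at h ⊢ <;> linarith

theorem collapse_one_sub [NeZero n] (x : ℤ) : collapse n (1 - x) = 2 - collapse n x := by
  have hn : (0 : ℤ) < n := by exact_mod_cast NeZero.pos n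
  have h := ediv_sub_sub_one_ediv (n := n) x
  simp only [ZMod.intCast_zmod_eq_zero_iff_dvd] at h
  rw [collapse, collapse, show 1 - x - 1 = -x by ring, Int.neg_ediv,
    Int.sign_eq_one_of_pos hn]
  split_ifs at h ⊢ <;> linarith

theorem collapse_val [NeZero n] (z : ZMod n) : collapse n z.val = max z.val 1 := by
  have hlt : (z.val : ℤ) < n := by exact_mod_cast z.val_lt
  obtain h0 | hpos := z.val.eq_zero_or_pos
  · rw [h0, collapse]
    simp [Int.neg_one_ediv, NeZero.pos n]
  · rw [collapse, Int.ediv_eq_zero_of_lt (by omega) (by omega)]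
    omega

variable [Fact (1 < n)]

theorem collapse_affineSwap (x : ℤ) : collapse n (affineSwap n x) = collapse n x := by
  rw [affineSwap_apply]
  split_ifs with h₀ h₁
  · rw [collapse_add_one, if_pos h₀, add_zero]
  · have h := collapse_add_one (n := n) (x - 1)
    rw [if_pos (by rw [Int.cast_sub, h₁]; simp), sub_add_cancel, add_zero] at h
    exact h.symm
  · rfl

end Collapse

/-- The total rotation spelled by a word. -/
def netRotation (w : List Letter_s11) : ℤ :=
  w.count .r - w.count .rInv

/-- The number of letters `r` and `r⁻¹` of a word. -/
def rotationCount (w : List Letter_s11) : ℕ :=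
  w.countP (· ≠ .δ)

theorem netRotation_cons_δ (w : List Letter_s11) : netRotation (.δ :: w) = netRotation w := by
  simp [netRotation]

theorem netRotation_cons_r (w : List Letter_s11) : netRotation (.r :: w) = netRotation w + 1 := by
  rw [netRotation, netRotation, List.count_cons_self, List.count_cons_of_ne (by decide)]
  push_cast
  ring

theorem netRotation_cons_rInv (w : List Letter_s11) : netRotation (.rInv :: w) = netRotation w - 1 := by
  rw [netRotation, netRotation, List.count_cons_self, List.count_cons_of_ne (by decide)]
  push_cast
  ring

theorem rotationCount_cons (a : Letter_s11) (w : List Letter_s11) :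
    rotationCount (a :: w) = rotationCount w + if a = .δ then 0 else 1 := by
  simp [rotationCount, List.countP_cons]

theorem count_δ_add_rotationCount (w : List Letter_s11) : w.count .δ + rotationCount w = w.length := by
  rw [List.length_eq_countP_add_countP (· == .δ), List.count, rotationCount]
  simp only [beq_iff_eq, ne_eq]

section Delay

variable {n : ℕ} [Fact (1 < n)]

/-- The number of rotations of the word that fail to move the occupant of the position `i` forward
on the collapsed circle, counted with sign. -/
def delay (n : ℕ) [Fact (1 < n)] (w : List Letter_s11) (i : ℤ) : ℤ :=
  netRotation w - (collapse n (affineWord n w i) - collapse n i)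

theorem delay_nil (i : ℤ) : delay n [] i = 0 := by
  simp [delay, netRotation]

theorem delay_cons_δ (w : List Letter_s11) (i : ℤ) : delay n (.δ :: w) i = delay n w i := by
  rw [delay, delay, affineWord_cons, Letter_s11.affine, collapse_affineSwap, netRotation_cons_δ]

theorem delay_cons_r (w : List Letter_s11) (i : ℤ) :
    delay n (.r :: w) i = delay n w i + if residueWord n w i = 0 then 1 else 0 := by
  rw [delay, delay, affineWord_cons, Letter_s11.affine, Equiv.coe_addRight, collapse_add_one,
    intCast_affineWord, netRotation_cons_r]
  split_ifs <;> ring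

theorem delay_cons_rInv (w : List Letter_s11) (i : ℤ) :
    delay n (.rInv :: w) i = delay n w i - if residueWord n w i = 1 then 1 else 0 := by
  have h := collapse_add_one (n := n) (affineWord n w i - 1)
  simp only [sub_add_cancel, Int.cast_sub, intCast_affineWord, Int.cast_one, sub_eq_zero] at h
  rw [delay, delay, affineWord_cons, Letter_s11.affine, Equiv.subRight_apply, h, netRotation_cons_rInv]
  split_ifs <;> ring

theorem sum_abs_delay_cons_le {a : Letter_s11} {w : List Letter_s11} (y : ZMod n)
    (ha : ∀ z : ZMod n, |delay n (a :: w) z.val| ≤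
      |delay n w z.val| + if residueWord n w z = y then 1 else 0) :
    ∑ z : ZMod n, |delay n (a :: w) z.val| ≤ ∑ z : ZMod n, |delay n w z.val| + 1 := by
  refine (Finset.sum_le_sum fun z _ ↦ ha z).trans_eq ?_
  rw [Finset.sum_add_distrib, Equiv.sum_comp (residueWord n w) fun z ↦ if z = y then (1 : ℤ) else 0]
  simp

theorem sum_abs_delay_le (w : List Letter_s11) :
    ∑ z : ZMod n, |delay n w z.val| ≤ rotationCount w := by
  induction w with
  | nil => simp [delay_nil]
  | cons a w ih =>
    rw [rotationCount_cons]
    cases a with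
    | δ => simpa [delay_cons_δ] using ih
    | r =>
      refine (sum_abs_delay_cons_le 0 fun z ↦ ?_).trans (by simpa using ih)
      rw [delay_cons_r, Int.cast_natCast, ZMod.natCast_zmod_val]
      exact (abs_add_le _ _).trans (by split_ifs <;> simp)
    | rInv =>
      refine (sum_abs_delay_cons_le 1 fun z ↦ ?_).trans (by simpa using ih)
      rw [delay_cons_rInv, Int.cast_natCast, ZMod.natCast_zmod_val]
      exact (abs_sub _ _).trans (by split_ifs <;> simp)

theorem IsReflecting.delay_eq {w : List Letter_s11} (hw : IsReflecting n w) (i : ℤ) :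
    delay n w i = netRotation w - 2 + 2 * collapse n i - (n - 1) * label n w i := by
  rw [delay, hw.affineWord_eq, collapse_add_mul, collapse_one_sub]
  ring

end Delay

theorem two_mul_card_sub_one_le_sub {s : Finset ℤ} (hs : ∀ x ∈ s, ∀ y ∈ s, Even (x - y)) {a b : ℤ}
    (ha : a ∈ s) (hsab : ∀ x ∈ s, x ∈ Set.Icc a b) : 2 * ((s.card : ℤ) - 1) ≤ b - a := by
  have hmaps : Set.MapsTo (fun x ↦ (x - a) / 2) s (Finset.Icc 0 ((b - a) / 2)) := by
    intro x hx
    obtain ⟨hax, hxb⟩ := hsab x hx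
    simp only [Finset.coe_Icc, Set.mem_Icc]
    omega
  have hinj : Set.InjOn (fun x ↦ (x - a) / 2) (s : Set ℤ) := by
    intro x hx y hy hxy
    obtain ⟨k, hk⟩ := hs x hx a ha
    obtain ⟨l, hl⟩ := hs y hy a ha
    simp only at hxy
    omega
  have hcard := Finset.card_le_card_of_injOn _ hmaps hinj
  rw [Int.card_Icc] at hcard
  obtain ⟨-, hab⟩ := hsab a ha
  omega

theorem card_sq_le_two_mul_sum_abs {s : Finset ℤ} (hs : ∀ x ∈ s, ∀ y ∈ s, Even (x - y)) :
    (s.card : ℤ) ^ 2 ≤ 2 * ∑ x ∈ s, |x| + 1 := by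
  induction s using Finset.strongInduction with
  | H s ih =>
    obtain hs1 | hs1 := Nat.lt_or_ge 1 s.card
    · have hne : s.Nonempty := Finset.card_pos.mp (by omega)
      have ha := s.min'_mem hne
      have hb := s.max'_mem hne
      have hab := s.min'_lt_max'_of_card hs1
      have hwidth := two_mul_card_sub_one_le_sub hs ha (b := s.max' hne)
        fun x hx ↦ ⟨s.min'_le x hx, s.le_max' x hx⟩
      generalize s.min' hne = a, s.max' hne = b at ha hb hab hwidth
      have hb' : b ∈ s.erase a := Finset.mem_erase.mpr ⟨hab.ne', hb⟩
      have hrest := ih ((s.erase a).erase b)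
        ((Finset.erase_ssubset hb').trans (Finset.erase_ssubset ha))
        fun x hx y hy ↦ hs x (Finset.mem_of_mem_erase (Finset.mem_of_mem_erase hx)) y
          (Finset.mem_of_mem_erase (Finset.mem_of_mem_erase hy))
      have hcard : (((s.erase a).erase b).card : ℤ) = s.card - 2 := by
        rw [Finset.card_erase_of_mem hb', Finset.card_erase_of_mem ha]
        omega
      rw [hcard] at hrest
      rw [← Finset.add_sum_erase s _ ha, ← Finset.add_sum_erase _ _ hb']
      linarith [neg_abs_le a, le_abs_self b]
    · have hsum : 0 ≤ ∑ x ∈ s, |x| := Finset.sum_nonneg fun x _ ↦ abs_nonneg x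
      interval_cases s.card <;> norm_num <;> linarith

section DelayCounting

variable {n : ℕ} [Fact (1 < n)] {w : List Letter_s11}

theorem eq_or_mem_zero_one_of_collapse_val_eq {z z' : ZMod n}
    (h : collapse n z.val = collapse n z'.val) : z = z' ∨ (z = 0 ∨ z = 1) ∧ (z' = 0 ∨ z' = 1) := by
  have hcases (y : ZMod n) (hy : y.val ≤ 1) : y = 0 ∨ y = 1 := by
    rw [← ZMod.natCast_zmod_val y]
    interval_cases y.val <;> simp
  rw [collapse_val, collapse_val] at h
  by_cases hz : z.val ≤ 1
  · exact .inr ⟨hcases z hz, hcases z' (by omega)⟩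
  · exact .inl (ZMod.val_injective n (by omega))

theorem IsReflecting.even_delay_sub (hw : IsReflecting n w) {z z' : ZMod n}
    (hcolor : color n w z = color n w z') : Even (delay n w z.val - delay n w z'.val) := by
  rw [color, color, ZMod.intCast_eq_intCast_iff_dvd_sub] at hcolor
  obtain ⟨q, hq⟩ := hcolor
  refine ⟨collapse n z.val - collapse n z'.val + (n - 1) * q, ?_⟩
  rw [hw.delay_eq, hw.delay_eq]
  linear_combination (n - 1 : ℤ) * hq

theorem IsReflecting.collapse_eq_of_delay_eq (hw : IsReflecting n w) {z z' : ZMod n}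
    (hcolor : color n w z = color n w z') (hdelay : delay n w z.val = delay n w z'.val) :
    collapse n z.val = collapse n z'.val := by
  rw [color, color, ZMod.intCast_eq_intCast_iff_dvd_sub] at hcolor
  obtain ⟨q, hq⟩ := hcolor
  have hdvd : (n - 1 : ℤ) ∣ collapse n z.val - collapse n z'.val := by
    refine ⟨-q, mul_left_cancel₀ (two_ne_zero (α := ℤ)) ?_⟩
    rw [hw.delay_eq, hw.delay_eq] at hdelay
    push_cast at hq
    linear_combination hdelay - (n - 1 : ℤ) * hq
  have hlt : |collapse n z.val - collapse n z'.val| < n - 1 := by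
    have hn : 1 < n := Fact.out
    have := z.val_lt
    have := z'.val_lt
    rw [collapse_val, collapse_val, abs_lt]
    omega
  exact sub_eq_zero.mp (Int.eq_zero_of_abs_lt_dvd hdvd hlt)

theorem IsReflecting.card_sq_le (hw : IsReflecting n w) {s : Finset (ZMod n)}
    (hs : IsMonochromatic n w s) (h01 : 0 ∈ s → 1 ∉ s) :
    (s.card : ℤ) ^ 2 ≤ 2 * ∑ z ∈ s, |delay n w z.val| + 1 := by
  have hinj : Set.InjOn (fun z : ZMod n ↦ delay n w z.val) s := by
    intro z hz z' hz' hdelay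
    obtain heq | ⟨rfl | rfl, rfl | rfl⟩ := eq_or_mem_zero_one_of_collapse_val_eq
      (hw.collapse_eq_of_delay_eq (hs z hz z' hz') hdelay)
    · exact heq
    · rfl
    · exact absurd hz' (h01 hz)
    · exact absurd hz (h01 hz')
    · rfl
  rw [← Finset.sum_image (f := fun x : ℤ ↦ |x|) hinj, ← Finset.card_image_of_injOn hinj]
  refine card_sq_le_two_mul_sum_abs ?_
  simp only [Finset.forall_mem_image]
  exact fun z hz z' hz' ↦ hw.even_delay_sub (hs z hz z' hz')

theorem IsReflecting.intCast_sum_abs_delay (hw : IsReflecting n w) (hn : Even n) :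
    ((∑ z : ZMod n, |delay n w z.val| : ℤ) : ZMod 2) = (colorClass n w)ᶜ.card := by
  have hn₀ : (n : ZMod 2) = 0 := (ZMod.natCast_eq_zero_iff_even).mpr hn
  have habs (x : ℤ) : ((|x| : ℤ) : ZMod 2) = x := by
    obtain h | h := abs_choice x <;> simp [h, CharTwo.neg_eq]
  have hdelay (z : ZMod n) : (delay n w z.val : ZMod 2) =
      netRotation w + color n w 0 + if z ∈ (colorClass n w)ᶜ then 1 else 0 := by
    have hcolor : color n w z = color n w 0 + if z ∈ (colorClass n w)ᶜ then 1 else 0 := by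
      simp only [Finset.mem_compl, mem_colorClass]
      generalize color n w z = c, color n w 0 = c₀
      decide +revert
    rw [hw.delay_eq, add_assoc, ← hcolor, color]
    push_cast
    rw [hn₀, show (2 : ZMod 2) = 0 from rfl]
    ring
  simp only [Int.cast_sum, habs, hdelay, Finset.sum_add_distrib, Finset.sum_boole,
    Finset.filter_univ_mem, Finset.sum_const, Finset.card_univ, ZMod.card, nsmul_eq_mul, hn₀,
    zero_mul, zero_add]

end DelayCounting

theorem choose_two_add (a b : ℕ) : (a + b).choose 2 = a.choose 2 + b.choose 2 + a * b := by
  have h : ((a + b).choose 2 : ℚ) = a.choose 2 + b.choose 2 + a * b := by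
    simp only [Nat.cast_choose_two, Nat.cast_add]
    ring
  exact_mod_cast h

theorem choose_two_eq_of_two_mul {a b : ℕ} (h : 2 * a = b * (b - 1)) : a = b.choose 2 := by
  rw [Nat.choose_two_right, ← h, Nat.mul_div_cancel_left _ two_pos]

section LowerBound

variable {n : ℕ} [Fact (1 < n)] {w : List Letter_s11}

theorem card_colorClass_add_card_compl (w : List Letter_s11) :
    (colorClass n w).card + (colorClass n w)ᶜ.card = n := by
  rw [Finset.card_add_card_compl, ZMod.card]

theorem IsReflecting.card_mul_card_compl_le (hw : IsReflecting n w)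
    (h01 : color n w 0 ≠ color n w 1) :
    (colorClass n w).card * (colorClass n w)ᶜ.card ≤ rotationCount w := by
  have h0 : (0 : ZMod n) ∈ colorClass n w := mem_colorClass.mpr rfl
  have h1 : (1 : ZMod n) ∉ colorClass n w := fun h ↦ h01 (mem_colorClass.mp h).symm
  have hC := hw.card_sq_le (isMonochromatic_colorClass w) fun _ ↦ h1
  have hCc := hw.card_sq_le (isMonochromatic_compl_colorClass w)
    fun h ↦ absurd h0 (Finset.mem_compl.mp h)
  have hcard := card_colorClass_add_card_compl (n := n) w
  have hparity := hw.intCast_sum_abs_delay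
  have hsum := sum_abs_delay_le (n := n) w
  have hsplit := Finset.sum_add_sum_compl (colorClass n w) fun z ↦ |delay n w z.val|
  generalize (colorClass n w).card = a, (colorClass n w)ᶜ.card = b at *
  zify
  -- The bounds on the two classes add up to `2 * a * b + (a - b) ^ 2 - 2 ≤ 2 * rotationCount w`,
  -- which suffices by rounding if `a ≠ b`; for `a = b` it falls short by one, excluded by parity.
  obtain rfl | hab := eq_or_ne a b
  · have hodd : ∑ z : ZMod n, |delay n w z.val| ≠ a * a - 1 := by
      intro heq
      have hpar := hparity ⟨a, hcard.symm⟩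
      rw [heq] at hpar
      push_cast at hpar
      revert hpar
      generalize (a : ZMod 2) = t
      decide +revert
    have hle : (a : ℤ) * a - 1 ≤ ∑ z : ZMod n, |delay n w z.val| := by linarith
    have := lt_of_le_of_ne hle hodd.symm
    omega
  · have hne : (a : ℤ) - b ≠ 0 := sub_ne_zero.mpr (by exact_mod_cast hab)
    have hsq : 0 < ((a : ℤ) - b) ^ 2 := by positivity
    have : 2 * ((a : ℤ) * b) ≤ 2 * ∑ z : ZMod n, |delay n w z.val| + 1 := by linarith
    omega

theorem IsReflecting.sub_one_le_rotationCount (hw : IsReflecting n w) (hn : 4 ≤ n)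
    (hcard : (colorClass n w)ᶜ.card = 1) : n - 1 ≤ rotationCount w := by
  have h0 : (0 : ZMod n) ∈ colorClass n w := mem_colorClass.mpr rfl
  have hmono : IsMonochromatic n w ((colorClass n w).erase 0) := fun z hz z' hz' ↦
    isMonochromatic_colorClass w z (Finset.mem_of_mem_erase hz) z' (Finset.mem_of_mem_erase hz')
  have hsq := hw.card_sq_le hmono fun h ↦ absurd h (Finset.notMem_erase _ _)
  have hle : ∑ z ∈ (colorClass n w).erase 0, |delay n w z.val| ≤ ∑ z : ZMod n, |delay n w z.val| :=
    Finset.sum_le_univ_sum_of_nonneg fun z ↦ abs_nonneg _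
  have hsum := sum_abs_delay_le (n := n) w
  have hparity := hw.intCast_sum_abs_delay
  have hcardC := card_colorClass_add_card_compl (n := n) w
  rw [Finset.card_erase_of_mem h0, show (colorClass n w).card - 1 = n - 2 by omega] at hsq
  generalize ∑ z : ZMod n, |delay n w z.val| = S at *
  zify [show 2 ≤ n by omega, show 1 ≤ n by omega] at hsq ⊢
  obtain rfl | h5 := hn.eq_or_lt
  · have hodd : S ≠ 2 := by
      rintro rfl
      have hpar := hparity (by decide)
      rw [hcard] at hpar
      exact absurd hpar (by decide)
    push_cast at hsq ⊢
    omega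
  · nlinarith

theorem IsReflecting.choose_two_le_length_of_color_ne (hw : IsReflecting n w)
    (h01 : color n w 0 ≠ color n w 1) : n.choose 2 ≤ w.length := by
  have hδ := hw.choose_two_add_choose_two_le
  have hrot := hw.card_mul_card_compl_le h01
  have hcard := card_colorClass_add_card_compl (n := n) w
  have hlen := count_δ_add_rotationCount w
  rw [← hcard, choose_two_add]
  omega

/-- At every stage of the word, the occupants of the positions `0` and `1` have the same color. The
stages are the suffixes of the word, since the last letter acts first. -/
def HasMatchedOccupants (n : ℕ) [Fact (1 < n)] (w : List Letter_s11) : Prop :=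
  ∀ v, v <:+ w → color n w ((residueWord n v).symm 0) = color n w ((residueWord n v).symm 1)

theorem HasMatchedOccupants.color_symm_zero_eq (h : HasMatchedOccupants n w)
    {v : List Letter_s11} (hv : v <:+ w) : color n w ((residueWord n v).symm 0) = color n w 0 := by
  induction v with
  | nil => rfl
  | cons a v ih =>
    have hv' : v <:+ w := (List.suffix_cons a v).trans hv
    have hsymm (z : ZMod n) :
        (residueWord n (a :: v)).symm z = (residueWord n v).symm ((a.residue n).symm z) := by
      simp [Equiv.symm_apply_eq]
    cases a with
    | δ => simpa [hsymm, Letter_s11.residue, ← h v hv'] using ih hv'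
    | r =>
      rw [h _ hv, hsymm]
      simpa [Letter_s11.residue] using ih hv'
    | rInv => simpa [hsymm, Letter_s11.residue, ← h v hv'] using ih hv'

theorem HasMatchedOccupants.color_eq_of_mem_swappedPairs (h : HasMatchedOccupants n w)
    {v : List Letter_s11} (hv : v <:+ w) {p : Sym2 (ZMod n)} (hp : p ∈ swappedPairs n v) {z : ZMod n}
    (hz : z ∈ p) : color n w z = color n w 0 := by
  induction v with
  | nil => simp [swappedPairs] at hp
  | cons a v ih =>
    have hv' : v <:+ w := (List.suffix_cons a v).trans hv
    cases a with
    | δ =>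
      obtain rfl | hp := Finset.mem_insert.mp hp
      · obtain rfl | rfl := Sym2.mem_iff.mp hz
        · exact h.color_symm_zero_eq hv'
        · rw [← h v hv', h.color_symm_zero_eq hv']
      · exact ih hv' hp
    | r => exact ih hv' hp
    | rInv => exact ih hv' hp

theorem IsReflecting.card_compl_colorClass_le_one (hw : IsReflecting n w)
    (h : HasMatchedOccupants n w) : (colorClass n w)ᶜ.card ≤ 1 := by
  refine Finset.card_le_one.mpr fun z hz z' hz' ↦ by_contra fun hne ↦ ?_
  have hpair := hw.mem_swappedPairs hne (isMonochromatic_compl_colorClass w z hz z' hz')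
  refine Finset.mem_compl.mp hz (mem_colorClass.mpr ?_)
  exact h.color_eq_of_mem_swappedPairs List.suffix_rfl hpair (Sym2.mem_mk_left z z')

theorem IsReflecting.choose_two_le_length_of_card_compl_le_one (hw : IsReflecting n w) (hn : 4 ≤ n)
    (hcard : (colorClass n w)ᶜ.card ≤ 1) : n.choose 2 ≤ w.length := by
  have hδ := hw.choose_two_add_choose_two_le
  have hsum := card_colorClass_add_card_compl (n := n) w
  have hlen := count_δ_add_rotationCount w
  obtain h0 | h1 := Nat.le_one_iff_eq_zero_or_eq_one.mp hcard
  · rw [show (colorClass n w).card = n by omega] at hδ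
    omega
  · have hrot := hw.sub_one_le_rotationCount hn h1
    have hchoose := choose_two_add (n - 1) 1
    rw [Nat.sub_add_cancel (by omega)] at hchoose
    rw [h1, show (colorClass n w).card = n - 1 by omega] at hδ
    omega

theorem IsReflecting.choose_two_le_length (hw : IsReflecting n w) (hn : 4 ≤ n) :
    n.choose 2 ≤ w.length := by
  by_cases h : HasMatchedOccupants n w
  · exact hw.choose_two_le_length_of_card_compl_le_one hn
      (hw.card_compl_colorClass_le_one h)
  · rw [HasMatchedOccupants] at h
    push Not at h
    obtain ⟨v, ⟨u, rfl⟩, hne⟩ := h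
    rw [← hw.color_twist, ← hw.color_twist, Equiv.apply_symm_apply, Equiv.apply_symm_apply] at hne
    simpa [add_comm] using hw.twist.choose_two_le_length_of_color_ne hne

end LowerBound

section UpperBound

/-- A word that cycles the occupants of the first `k + 2` positions, up to a rotation. -/
def cycleWord : ℕ → List Letter_s11
  | 0 => [.δ]
  | k + 1 => cycleWord k ++ [.r, .δ]

/-- A word that reverses the occupants of the first `k + 2` positions, up to a rotation. Inverting
letters conjugates by `z ↦ 1 - z`, so that consecutive sweeps run in opposite directions and no
rotation is spent on returning to the start. -/
def reverseWord : ℕ → List Letter_s11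
  | 0 => [.δ]
  | k + 1 => cycleWord (k + 1) ++ .rInv :: (reverseWord k).map .inv

/-- A word for `z ↦ -z` on `A + B + 4` positions, which reverses a block of `A + 2` positions and
then the complementary block of `B + 2` positions. The rotations align the blocks, since
`reverseWord k` expects its block to begin at `-(k / 2)`. -/
def negWord (A B : ℕ) : List Letter_s11 :=
  reverseWord B ++ (List.replicate (B / 2 + 2) .rInv ++
    ((reverseWord A).map .inv ++ List.replicate (A + 1 - A / 2) .rInv))

theorem length_cycleWord (k : ℕ) : (cycleWord k).length = 2 * k + 1 := by
  induction k with
  | zero => rfl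
  | succ k ih => rw [cycleWord, List.length_append, ih]; rfl

theorem length_reverseWord (k : ℕ) : (reverseWord k).length + 1 = (k + 1) * (k + 2) := by
  induction k with
  | zero => rfl
  | succ k ih =>
    simp only [reverseWord, List.length_append, List.length_cons, List.length_map,
      length_cycleWord]
    linarith

theorem length_negWord (A B : ℕ) :
    (negWord A B).length + 2 =
      (A + 1) * (A + 2) + (B + 1) * (B + 2) + (B / 2 + 2) + (A + 1 - A / 2) := by
  simp only [negWord, List.length_append, List.length_map, List.length_replicate]
  linarith [length_reverseWord A, length_reverseWord B]

/-- The cycle `0 ↦ 1 ↦ ⋯ ↦ m ↦ 0`, extended by the identity. -/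
def cycleFun (m i : ℕ) : ℕ :=
  if i < m then i + 1 else if i = m then 0 else i

/-- The reversal of the interval `[0, m]`, extended by the identity. -/
def reverseFun (m i : ℕ) : ℕ :=
  if i ≤ m then m - i else i

theorem cycleFun_add_one_eq (m i : ℕ) :
    cycleFun (m + 1) i = cycleFun m (Equiv.swap m (m + 1) i) := by
  simp only [cycleFun, Equiv.swap_apply_def]
  grind

variable {n : ℕ}

theorem natCast_swap {a b i : ℕ} (ha : a < n) (hb : b < n) (hi : i < n) :
    ((Equiv.swap a b i : ℕ) : ZMod n) = Equiv.swap (a : ZMod n) b i := by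
  have hinj {k : ℕ} (hk : k < n) : (i : ZMod n) = k ↔ i = k := by
    rw [ZMod.natCast_eq_natCast_iff', Nat.mod_eq_of_lt hi, Nat.mod_eq_of_lt hk]
  simp only [Equiv.swap_apply_def, hinj ha, hinj hb]
  split_ifs <;> rfl

theorem swap_zero_one_sub_add (z c : ZMod n) :
    Equiv.swap 0 1 (z - c) + c = Equiv.swap c (c + 1) z := by
  simp only [Equiv.swap_apply_def]
  grind

theorem swap_lt {a b i : ℕ} (ha : a < n) (hb : b < n) (hi : i < n) : Equiv.swap a b i < n := by
  rw [Equiv.swap_apply_def]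
  split_ifs <;> assumption

theorem residueWord_cycleWord {k i : ℕ} (hk : k + 1 < n) (hi : i < n) :
    residueWord n (cycleWord k) (i - k) = cycleFun (k + 1) i := by
  induction k generalizing i with
  | zero =>
    have h := natCast_swap (a := 0) (b := 1) (by omega) hk hi
    have hid (j : ℕ) : cycleFun 0 j = j := by grind [cycleFun]
    simpa [cycleFun_add_one_eq, hid, cycleWord, Letter_s11.residue] using h.symm
  | succ k ih =>
    have hshift : Equiv.swap 0 1 ((i : ZMod n) - (k + 1 : ℕ)) + 1 =
        (Equiv.swap (k + 1) (k + 1 + 1) i : ℕ) - k := by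
      rw [natCast_swap (by omega) hk hi, Nat.cast_succ (k + 1), ← swap_zero_one_sub_add]
      push_cast
      ring
    simp only [cycleWord, residueWord_append, residueWord_cons, residueWord_nil,
      Equiv.Perm.coe_one, id_eq, Letter_s11.residue, Equiv.coe_addRight]
    rw [hshift, ih (by omega) (swap_lt (by omega) hk hi), cycleFun_add_one_eq (k + 1)]

/-- The recursive step of `reverseWord` in coordinates: the shorter reversal acts at the index `y`
and the cycle at the index `x`. -/
theorem exists_cycleFun_eq_reverseFun {k i : ℕ} (hk : k + 1 < n) (hi : i < n) :
    ∃ y < n, ∃ x < n, (y : ZMod n) = k - i ∧ (x : ZMod n) = k - reverseFun k y ∧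
      cycleFun (k + 1) x = reverseFun (k + 1) i := by
  obtain hik | rfl | hik := lt_trichotomy i (k + 1)
  · refine ⟨k - i, by omega, k - i, by omega, ?_, ?_, ?_⟩
    · push_cast [show i ≤ k by omega]
      rfl
    · rw [reverseFun, if_pos (by omega), Nat.sub_sub_self (by omega)]
      push_cast [show i ≤ k by omega]
      rfl
    · grind [cycleFun, reverseFun]
  · refine ⟨n - 1, by omega, k + 1, hk, ?_, ?_, ?_⟩
    · simp [show 1 ≤ n by omega]
    · simp [reverseFun, show ¬ n - 1 ≤ k by omega, show 1 ≤ n by omega]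
    · grind [cycleFun, reverseFun]
  · refine ⟨n + k - i, by omega, i, hi, ?_, ?_, ?_⟩
    · simp [show i ≤ n + k by omega]
    · simp [reverseFun, show ¬ n + k - i ≤ k by omega, show i ≤ n + k by omega]
    · grind [cycleFun, reverseFun]

theorem residueWord_reverseWord {k i : ℕ} (hk : k + 1 < n) (hi : i < n) :
    residueWord n (reverseWord k) (i - (k / 2 : ℕ)) = reverseFun (k + 1) i := by
  induction k generalizing i with
  | zero =>
    have h := residueWord_cycleWord hk hi
    have hfun : cycleFun 1 i = reverseFun 1 i := by grind [cycleFun, reverseFun]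
    simpa [hfun, cycleWord, reverseWord] using h
  | succ k ih =>
    obtain ⟨y, hy, x, hx, hyi, hxy, hfun⟩ := exists_cycleFun_eq_reverseFun hk hi
    have hhalf : (((k + 1) / 2 : ℕ) : ZMod n) + (k / 2 : ℕ) = k := by
      rw [← Nat.cast_add]
      congr 1
      omega
    have hrest := residueWord_map_inv_eq (n := n) (ih (by omega) hy)
      (z := i - ((k + 1) / 2 : ℕ)) (by rw [hyi]; push_cast; linear_combination -hhalf)
    have hcycle : (1 - reverseFun (k + 1) y - 1 : ZMod n) = x - (k + 1 : ℕ) := by rw [hxy]; ring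
    rw [reverseWord, residueWord_append, residueWord_cons, hrest, Letter_s11.residue,
      Equiv.subRight_apply, hcycle, residueWord_cycleWord hk hx, hfun]

theorem residueWord_replicate_rInv (k : ℕ) (z : ZMod n) :
    residueWord n (List.replicate k .rInv) z = z - k := by
  induction k with
  | zero => simp
  | succ k ih =>
    rw [List.replicate_succ, residueWord_cons, ih, Letter_s11.residue, Equiv.subRight_apply]
    push_cast
    ring

theorem exists_reverseFun_eq_sub {A B i : ℕ} (hn : A + B + 2 = n) (hi : i < n) :
    ∃ x < n, (x : ZMod n) = -1 - reverseFun A i ∧ (reverseFun B x : ZMod n) = i - (A + 1 : ℕ) := by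
  have hn₀ : (A : ZMod n) + B + 2 = 0 := by
    rw [← ZMod.natCast_self n, ← hn]
    push_cast
    rfl
  by_cases hiA : i ≤ A
  · refine ⟨B + 1 + i, by omega, ?_, ?_⟩
    · push_cast [reverseFun, hiA, if_true]
      linear_combination hn₀
    · rw [reverseFun, if_neg (by omega)]
      push_cast
      linear_combination hn₀
  · refine ⟨n - 1 - i, by omega, ?_, ?_⟩
    · rw [reverseFun, if_neg hiA]
      push_cast [show i ≤ n - 1 by omega, show 1 ≤ n by omega]
      simp
    · rw [reverseFun, if_pos (by omega), show B - (n - 1 - i) = i - (A + 1) by omega,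
        Nat.cast_sub (by omega)]

theorem residueWord_negWord {A B : ℕ} (hn : A + B + 4 = n) (z : ZMod n) :
    residueWord n (negWord A B) z = -z := by
  have : NeZero n := ⟨by omega⟩
  obtain ⟨i, hi, hiz⟩ : ∃ i < n, (i : ZMod n) = A + 2 - z :=
    ⟨_, ZMod.val_lt _, ZMod.natCast_zmod_val _⟩
  obtain ⟨x, hx, hxi, hfun⟩ := exists_reverseFun_eq_sub (A := A + 1) (B := B + 1) (by omega) hi
  have hhalf : ((A + 1 - A / 2 : ℕ) : ZMod n) = A + 1 - (A / 2 : ℕ) := by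
    push_cast [show A / 2 ≤ A + 1 by omega]
    rfl
  have hA := residueWord_map_inv_eq (n := n) (residueWord_reverseWord (k := A) (by omega) hi)
    (z := z - (A + 1 - A / 2 : ℕ)) (by rw [hhalf, hiz]; ring)
  have hshift : (1 - reverseFun (A + 1) i - (B / 2 + 2 : ℕ) : ZMod n) = x - (B / 2 : ℕ) := by
    rw [hxi]
    push_cast
    ring
  rw [negWord, residueWord_append, residueWord_append, residueWord_append,
    residueWord_replicate_rInv, residueWord_replicate_rInv, hA, hshift,
    residueWord_reverseWord (by omega) hx, hfun, hiz]
  push_cast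
  ring

theorem length_negWord_add_one {A B : ℕ} (hAB : A = B ∨ A = B + 1 ∨ B = A + 1)
    (hhalf : B / 2 + 2 + (A + 1 - A / 2) = (A + B + 4) / 2 + 1) :
    (negWord A B).length + 1 = (A + B + 4).choose 2 := by
  have h := length_negWord A B
  rw [add_assoc _ (B / 2 + 2), hhalf] at h
  refine choose_two_eq_of_two_mul ?_
  rw [show A + B + 4 - 1 = A + B + 3 by omega]
  obtain rfl | rfl | rfl := hAB
  · rw [show (A + A + 4) / 2 = A + 2 by omega] at h
    linarith
  · rw [show (B + 1 + B + 4) / 2 = B + 2 by omega] at h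
    linarith
  · rw [show (A + (A + 1) + 4) / 2 = A + 2 by omega] at h
    linarith

theorem exists_residueWord_eq_neg (hn : 4 ≤ n) :
    ∃ w, (∀ z, residueWord n w z = -z) ∧ w.length + 1 = n.choose 2 := by
  obtain ⟨A, B, rfl, hAB, hhalf⟩ : ∃ A B, A + B + 4 = n ∧ (A = B ∨ A = B + 1 ∨ B = A + 1) ∧
      B / 2 + 2 + (A + 1 - A / 2) = n / 2 + 1 := by
    -- For odd `n`, an odd `A` would cost one more rotation.
    obtain heven | hodd := n.mod_two_eq_zero_or_one
    · exact ⟨n / 2 - 2, n / 2 - 2, by omega, by omega, by omega⟩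
    · exact ⟨2 * ((n + 1) / 4) - 2, n - 2 - 2 * ((n + 1) / 4), by omega, by omega, by omega⟩
  exact ⟨negWord A B, residueWord_negWord rfl, length_negWord_add_one hAB hhalf⟩

end UpperBound

section WordMetric

variable {n : ℕ} [NeZero n]

/-- Transport of permutations of the `n` positions from `Fin n` to the residues modulo `n`. -/
def toResidue (n : ℕ) [NeZero n] : Equiv.Perm (Fin n) ≃* Equiv.Perm (ZMod n) :=
  (ZMod.finEquiv n).toEquiv.permCongrHom

theorem toResidue_finRotate : toResidue n (finRotate n) = Letter_s11.residue n .r := by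
  obtain ⟨m, rfl⟩ := Nat.exists_eq_succ_of_ne_zero (NeZero.ne n)
  ext z : 1
  exact finRotate_apply z

theorem toResidue_delta (hn : 2 ≤ n) : toResidue n (delta n hn) = Letter_s11.residue n .δ := by
  have h1 : (⟨1, by omega⟩ : Fin n) = 1 := by
    ext
    rw [Fin.val_one', Nat.mod_eq_of_lt (by omega)]
  have h := Equiv.symm_trans_swap_trans (⟨0, by omega⟩ : Fin n) ⟨1, by omega⟩
    (ZMod.finEquiv n).toEquiv
  refine h.trans ?_
  rw [h1]
  exact congrArg₂ Equiv.swap (map_zero (ZMod.finEquiv n)) (map_one (ZMod.finEquiv n))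

theorem toResidue_revPerm (z : ZMod n) : toResidue n Fin.revPerm z = -1 - z := by
  obtain ⟨m, rfl⟩ := Nat.exists_eq_succ_of_ne_zero (NeZero.ne n)
  have h (i : Fin (m + 1)) : i.rev = -1 - i := by
    rw [← Fin.last_sub, neg_eq_iff_eq_neg.mp (Fin.neg_last m)]
  exact h z

theorem toResidue_inv_revPerm_mul (z : ZMod n) :
    toResidue n (Fin.revPerm * finRotate n ^ (n - 1))⁻¹ z = -z := by
  have hcast : ((n - 1 : ℕ) : ZMod n) = -1 := by
    rw [Nat.cast_sub NeZero.one_le, ZMod.natCast_self, Nat.cast_one, zero_sub]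
  rw [map_inv, map_mul, map_pow, toResidue_finRotate, Letter_s11.residue, Equiv.Perm.inv_eq_iff_eq,
    Equiv.Perm.mul_apply, Equiv.Perm.coe_pow, Equiv.coe_addRight, add_right_iterate, nsmul_one,
    hcast, toResidue_revPerm]
  ring

theorem gens_eq_range (hn : 2 ≤ n) :
    gens n hn = Set.range fun a : Letter_s11 ↦ (toResidue n).symm (a.residue n) := by
  have hδ := (MulEquiv.symm_apply_eq _).mpr (toResidue_delta hn).symm
  have hr := (MulEquiv.symm_apply_eq _).mpr (toResidue_finRotate (n := n)).symm
  have hrInv : (toResidue n).symm (Letter_s11.residue n .rInv) = (finRotate n)⁻¹ := by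
    rw [← hr, ← map_inv]
    exact congrArg _ (Equiv.ext fun z ↦ sub_eq_add_neg z 1)
  ext g
  constructor
  · rintro (rfl | rfl | rfl)
    exacts [⟨.δ, hδ⟩, ⟨.r, hr⟩, ⟨.rInv, hrInv⟩]
  · rintro ⟨_ | _ | _, rfl⟩
    exacts [.inl hδ, .inr (.inl hr), .inr (.inr hrInv)]

theorem prod_map_toResidue_symm (w : List Letter_s11) :
    (w.map fun a ↦ (toResidue n).symm (a.residue n)).prod =
      (toResidue n).symm (residueWord n w) := by
  rw [residueWord, map_list_prod, List.map_map]
  rfl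

theorem isMinWordLen_iff (hn : 2 ≤ n) (g : Equiv.Perm (Fin n)) (d : ℕ) :
    IsMinWordLen n hn g d ↔
      (∃ w, residueWord n w = toResidue n g ∧ w.length = d) ∧
        ∀ w, residueWord n w = toResidue n g → d ≤ w.length := by
  have hgens (l : List (Equiv.Perm (Fin n))) : (∀ x ∈ l, x ∈ gens n hn) ↔
      ∃ w : List Letter_s11, w.map (fun a ↦ (toResidue n).symm (a.residue n)) = l := by
    rw [gens_eq_range, ← Set.mem_range, Set.range_list_map, Set.mem_ofPred_eq]
  simp only [IsMinWordLen, hgens, exists_exists_eq_and, forall_exists_index,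
    forall_apply_eq_imp_iff, prod_map_toResidue_symm, MulEquiv.symm_apply_eq, List.length_map]

end WordMetric

theorem half_mul_half_sub_one_add_eq_choose_two {n : ℕ} (hn : 4 ≤ n) :
    (n + 1) / 2 * ((n + 1) / 2 - 1) - 1 + (n / 2 * (n / 2 - 1) - 1) + (n / 2 + 1) + 1 =
      n.choose 2 := by
  refine choose_two_eq_of_two_mul ?_
  obtain ⟨m, rfl | rfl⟩ := n.even_or_odd'
  all_goals
    obtain ⟨k, rfl⟩ := Nat.exists_eq_add_of_le' (show 2 ≤ m by omega)
    have hk : 1 ≤ (k + 2) * (k + 1) := Nat.mul_pos (by omega) (by omega)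
  · rw [show (2 * (k + 2) + 1) / 2 = k + 2 by omega, show 2 * (k + 2) / 2 = k + 2 by omega,
      show k + 2 - 1 = k + 1 by omega, show 2 * (k + 2) - 1 = 2 * k + 3 by omega]
    zify [hk]
    ring
  · have hk' : 1 ≤ (k + 3) * (k + 2) := Nat.mul_pos (by omega) (by omega)
    rw [show (2 * (k + 2) + 1 + 1) / 2 = k + 3 by omega,
      show (2 * (k + 2) + 1) / 2 = k + 2 by omega, show k + 3 - 1 = k + 2 by omega,
      show k + 2 - 1 = k + 1 by omega, Nat.add_sub_cancel]
    zify [hk, hk']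
    ring

/-- For `n ≥ 4`, with `s = [n n-1 … 1]` and `r = (1 2 … n)`,
`dist(s r^(n-1), 1) = ⌈n/2⌉(⌈n/2⌉-1) - 1 + ⌊n/2⌋(⌊n/2⌋-1) - 1 + ⌊n/2⌋ + 1`
in the word metric with respect to `{(1 2), r, r⁻¹}`. -/
theorem stmt11 (n : ℕ) (hn : 4 ≤ n) :
    IsMinWordLen n (by omega)
      (((Fin.revPerm : Equiv.Perm (Fin n)) * (finRotate n) ^ (n - 1))⁻¹)
      (((n + 1) / 2 * ((n + 1) / 2 - 1) - 1) + (n / 2 * (n / 2 - 1) - 1) + (n / 2 + 1)) := by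
  have : Fact (1 < n) := ⟨by omega⟩
  have hformula := half_mul_half_sub_one_add_eq_choose_two hn
  rw [isMinWordLen_iff]
  simp only [Equiv.ext_iff, toResidue_inv_revPerm_mul]
  constructor
  · obtain ⟨w, hw, hlength⟩ := exists_residueWord_eq_neg hn
    exact ⟨w, hw, by omega⟩
  · intro w hw
    have hreflecting : IsReflecting n (.r :: w) := fun z ↦ by
      rw [residueWord_cons, hw]
      exact neg_add_eq_sub z 1
    have hlength := hreflecting.choose_two_le_length hn
    rw [List.length_cons] at hlength
    omega
end

section
/- Let n ≥ 4, s = [n n-1 … 1], r = (1 2 … n), δ = (1 2) in S_n, and dist the word metric with respect to {δ, r, r^{-1}}. For every integer i with 2 ≤ i ≤ ⌊n/2⌋ + 2, dist(s r^{n-i}, 1) = ⌈n/2⌉(⌈n/2⌉-1) - 1 + ⌊n/2⌋(⌊n/2⌋-1) - 1 + ⌊n/2⌋ - i + 4. -/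
/-!
Number the points by `ZMod n`, so that `r` is `x ↦ x + 1`, `δ` swaps `0` and `1`, and `s r^{n-i}`
is the reflection `x ↦ k + 1 - x` with `k = i - 2`. Its length is `n.choose 2 - k`.

For the upper bound, cut the cycle into two blocks whose sizes differ by at most one: reversing
both of them is a reflection, and a block of size `j + 2` is reversed from the inside out, up to a
rotation, in `j (j + 3) + 1` letters.

For the lower bound it suffices that `x ↦ 1 - x` needs `n (n - 1) / 2` letters. Lift a word for it
to `ℤ`, after choosing lifts of the points such that it acts as `z ↦ 1 - z + n` on those in a set
`T` and as `z ↦ 1 - z` on the others. It reverses the order of any two points of the same class,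
and each `δ` reverses only one pair, which bounds the number of `δ`s. Each rotation changes a
suitable potential of a single point, and at every moment the potentials within a class are
pairwise distinct, unless the points at `0` and `1` both belong to that class; spread-out potentials
bound the number of rotations. If at every moment the points at `0` and `1` are of the same class,
then no point of the other class ever meets a `δ`, which leaves room for at most one such point.
-/

namespace LRX

open Equiv Pointwise

/-- The letters `δ`, `r`, `r⁻¹` of words in the generators. -/
inductive Letter
  | swap
  | rot
  | rotInv

/-- The permutation a letter stands for. The `n` points are numbered by `ZMod n`, so that `r` is
the translation by `1`. -/
def Letter.perm (n : ℕ) : Letter → Perm (ZMod n)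
  | swap => Equiv.swap 0 1
  | rot => Equiv.addRight 1
  | rotInv => Equiv.addRight (-1)

/-- The generating set `{δ, r, r⁻¹}`; the words of length `d` evaluate to the elements of the
pointwise power `generators n ^ d`. -/
def generators (n : ℕ) : Set (Perm (ZMod n)) :=
  Set.range (Letter.perm n)

variable {n : ℕ}

theorem mem_pow_iff_exists_list {M : Type*} [Monoid M] {S : Set M} {g : M} {d : ℕ} :
    g ∈ S ^ d ↔ ∃ l : List M, (∀ x ∈ l, x ∈ S) ∧ l.prod = g ∧ l.length = d := by
  rw [Set.mem_pow]
  constructor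
  · rintro ⟨f, rfl⟩
    exact ⟨List.ofFn fun i => (f i : M), by simp [List.mem_ofFn], rfl, List.length_ofFn⟩
  · rintro ⟨l, hl, rfl, rfl⟩
    exact ⟨fun i => ⟨l[i], hl _ (l.getElem_mem _)⟩, by simp⟩

/-! ### Words reversing complementary blocks -/

theorem swap_mem_generators : swap 0 1 ∈ generators n := ⟨.swap, rfl⟩

theorem addRight_one_mem_generators : Equiv.addRight 1 ∈ generators n := ⟨.rot, rfl⟩

theorem addRight_neg_one_mem_generators : Equiv.addRight (-1) ∈ generators n := ⟨.rotInv, rfl⟩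

theorem addRight_neg_natCast_mem (k : ℕ) :
    Equiv.addRight (-k : ZMod n) ∈ generators n ^ k := by
  have h := Set.pow_mem_pow (n := k) (addRight_neg_one_mem_generators (n := n))
  rwa [nsmul_addRight, nsmul_eq_mul, mul_neg_one] at h

theorem addRight_neg_mul_subLeft {A : Type*} [AddCommGroup A] (a b : A) :
    Equiv.addRight (-a) * Equiv.subLeft (a + b) = Equiv.subLeft b :=
  Equiv.ext fun x => by simp only [Perm.mul_apply, coe_addRight, subLeft_apply]; abel

theorem conj_subLeft_one_mem {g : Perm (ZMod n)} {d : ℕ} (hg : g ∈ generators n ^ d) :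
    MulAut.conj (Equiv.subLeft 1) g ∈ generators n ^ d := by
  have h_le : MulAut.conj (Equiv.subLeft 1) '' generators n ⊆ generators n := by
    rintro _ ⟨_, ⟨c, rfl⟩, rfl⟩
    cases c
    · refine ⟨.swap, ?_⟩
      rw [Letter.perm, MulAut.conj_apply, ← swap_apply_apply, swap_comm]
      simp
    · exact ⟨.rotInv, Equiv.ext fun x => by
        simp [Letter.perm, Perm.inv_def, ← sub_eq_add_neg, add_comm]⟩
    · exact ⟨.rot, Equiv.ext fun x => by simp [Letter.perm, Perm.inv_def, add_comm]⟩
  have h := Set.mem_image_of_mem (MulAut.conj (Equiv.subLeft 1)) hg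
  rw [Set.image_pow] at h
  exact Set.pow_subset_pow_left h_le h

theorem inv_mem_generators_pow {g : Perm (ZMod n)} {d : ℕ} (hg : g ∈ generators n ^ d) :
    g⁻¹ ∈ generators n ^ d := by
  have h_le : (generators n)⁻¹ ⊆ generators n := by
    rintro g ⟨c, hc⟩
    rw [← inv_inv g, ← hc]
    cases c
    · exact ⟨.swap, (swap_inv 0 1).symm⟩
    · exact ⟨.rotInv, (neg_addRight 1).symm⟩
    · exact ⟨.rot, by simp [Letter.perm]⟩
  have h : g⁻¹ ∈ (generators n)⁻¹ ^ d := by rwa [inv_pow, Set.inv_mem_inv]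
  exact Set.pow_subset_pow_left h_le h

theorem natCast_ne_natCast {i j : ℕ} (hi : i < n) (hj : j < n) (h : i ≠ j) :
    (i : ZMod n) ≠ j :=
  fun h_eq => h (CharP.natCast_injOn_Iio (ZMod n) n hi hj h_eq)

theorem swap_mul_addRight_pow_apply_one {k : ℕ} (hk : k + 2 ≤ n) :
    ((swap 0 1 * Equiv.addRight 1 : Perm (ZMod n)) ^ k) 1 = (k + 1 : ℕ) := by
  induction k with
  | zero => simp
  | succ k ih =>
    have h₀ := natCast_ne_natCast (n := n) (i := k + 2) (j := 0) (by omega) (by omega) (by omega)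
    have h₁ := natCast_ne_natCast (n := n) (i := k + 2) (j := 1) (by omega) (by omega) (by omega)
    push_cast at h₀ h₁
    rw [pow_succ', Perm.mul_apply, ih (by omega), Perm.mul_apply, Equiv.coe_addRight]
    push_cast
    rw [add_assoc, one_add_one_eq_two, swap_apply_of_ne_of_ne h₀ h₁]

theorem swap_zero_natCast_mem {k : ℕ} (hk : k + 2 ≤ n) :
    swap 0 ((k + 1 : ℕ) : ZMod n) ∈ generators n ^ (4 * k + 1) := by
  set f : Perm (ZMod n) := swap 0 1 * Equiv.addRight 1
  have hf : f ^ k ∈ generators n ^ (2 * k) := by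
    rw [pow_mul, sq]
    exact Set.pow_mem_pow (Set.mul_mem_mul swap_mem_generators addRight_one_mem_generators)
  have hf_zero : (f ^ k) 0 = 0 := Perm.pow_apply_eq_self_of_apply_eq_self (by simp [f]) k
  have h_conj : swap 0 ((k + 1 : ℕ) : ZMod n) = f ^ k * swap 0 1 * (f ^ k)⁻¹ := by
    rw [← swap_apply_apply, hf_zero, swap_mul_addRight_pow_apply_one hk]
  have h_mem := Set.mul_mem_mul (Set.mul_mem_mul hf swap_mem_generators)
    (inv_mem_generators_pow hf)
  rwa [← h_conj, ← pow_succ, ← pow_add, show 2 * k + 1 + 2 * k = 4 * k + 1 by ring] at h_mem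

/-- The permutation reversing the block `0, 1, …, k - 1` and fixing all other points (for
`k ≤ n`), built up by reversing the inner block `1, …, k - 2` and swapping the two ends. -/
def blockReversal (n : ℕ) : ℕ → Perm (ZMod n)
  | 0 => 1
  | 1 => 1
  | k + 2 => swap 0 ((k + 1 : ℕ) : ZMod n) *
      MulAut.conj (Equiv.addRight 1) (blockReversal n k)

theorem blockReversal_add_two_apply (k : ℕ) (x : ZMod n) :
    blockReversal n (k + 2) (x + 1) = swap 0 ((k + 1 : ℕ) : ZMod n) (blockReversal n k x + 1) := by
  simp [blockReversal]

theorem blockReversal_apply_of_le {k i : ℕ} (hki : k ≤ i) (hi : i < n) :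
    blockReversal n k i = i := by
  induction k using Nat.twoStepInduction generalizing i with
  | zero | one => simp [blockReversal]
  | more k ih _ =>
    obtain ⟨i, rfl⟩ := Nat.exists_eq_add_of_le' (show 1 ≤ i by omega)
    rw [Nat.cast_succ, blockReversal_add_two_apply, ih (by omega) (by omega), ← Nat.cast_succ,
      ← Nat.cast_zero]
    exact swap_apply_of_ne_of_ne (natCast_ne_natCast hi (by omega) (by omega))
      (natCast_ne_natCast hi (by omega) (by omega))

theorem blockReversal_apply {k i j : ℕ} (hk : k ≤ n) (hij : i + j + 1 = k) :
    blockReversal n k i = j := by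
  induction k using Nat.twoStepInduction generalizing i j with
  | zero => omega
  | one => obtain ⟨rfl, rfl⟩ : i = 0 ∧ j = 0 := by omega
           simp [blockReversal]
  | more k ih _ =>
    rcases i with _ | i
    · have h_last : ((n - 1 : ℕ) : ZMod n) + 1 = (0 : ℕ) := by
        rw [← Nat.cast_succ, Nat.succ_eq_add_one, Nat.sub_add_cancel (by omega),
          ZMod.natCast_self, Nat.cast_zero]
      rw [← h_last, blockReversal_add_two_apply, blockReversal_apply_of_le (by omega) (by omega),
        h_last, Nat.cast_zero, swap_apply_left, show j = k + 1 by omega]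
    rw [Nat.cast_succ, blockReversal_add_two_apply]
    rcases j with _ | j
    · rw [blockReversal_apply_of_le (by omega) (by omega), show i = k by omega, ← Nat.cast_succ,
        swap_apply_right, Nat.cast_zero]
    · rw [ih (by omega) (i := i) (j := j) (by omega), ← Nat.cast_succ, ← Nat.cast_zero]
      exact swap_apply_of_ne_of_ne (natCast_ne_natCast (by omega) (by omega) (by omega))
        (natCast_ne_natCast (by omega) (by omega) (by omega))

theorem blockReversal_mul_addRight {k l : ℕ} (hkl : k + l = n) (hl : 0 < n) :
    blockReversal n k * Equiv.addRight (k : ZMod n) =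
      Equiv.subLeft (-1) * blockReversal n l := by
  have : NeZero n := ⟨hl.ne'⟩
  have h_wrap : (k : ZMod n) + l = 0 := by rw [← Nat.cast_add, hkl, ZMod.natCast_self]
  ext x
  obtain ⟨i, hi, rfl⟩ : ∃ i < n, (i : ZMod n) = x := ⟨x.val, x.val_lt, x.natCast_zmod_val⟩
  simp only [Perm.mul_apply, Equiv.coe_addRight, Equiv.subLeft_apply]
  rcases lt_or_ge i l with h_lt | h_ge
  · obtain ⟨j, rfl⟩ := Nat.exists_eq_add_of_lt h_lt
    rw [blockReversal_apply (by omega) (show i + j + 1 = i + j + 1 from rfl), ← Nat.cast_add,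
      blockReversal_apply_of_le (by omega) (by omega)]
    push_cast at h_wrap ⊢
    linear_combination h_wrap
  · obtain ⟨j, rfl⟩ := Nat.exists_eq_add_of_le h_ge
    obtain ⟨m, rfl⟩ := Nat.exists_eq_add_of_lt (show j < k by omega)
    rw [blockReversal_apply_of_le (by omega) (by omega),
      show ((l + j : ℕ) : ZMod n) + (j + m + 1 : ℕ) = j by
        push_cast at h_wrap ⊢; linear_combination h_wrap,
      blockReversal_apply (by omega) (show j + m + 1 = j + m + 1 from rfl)]
    push_cast at h_wrap ⊢
    linear_combination h_wrap

theorem blockReversal_mul_pow_mem {j : ℕ} (hj : j + 2 ≤ n) :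
    blockReversal n (j + 2) * Equiv.addRight 1 ^ (j / 2) ∈ generators n ^ (j * (j + 3) + 1) := by
  induction j using Nat.twoStepInduction with
  | zero => simpa [blockReversal, -MulAut.conj_apply] using swap_mem_generators (n := n)
  | one => simpa [blockReversal, -MulAut.conj_apply] using swap_zero_natCast_mem hj
  | more j ih _ =>
    have h_eq : blockReversal n (j + 2 + 2) * Equiv.addRight 1 ^ ((j + 2) / 2) =
        swap 0 ((j + 2 + 1 : ℕ) : ZMod n) *
          (Equiv.addRight 1 * (blockReversal n (j + 2) * Equiv.addRight 1 ^ (j / 2))) := by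
      rw [Nat.add_div_right j two_pos, pow_succ', blockReversal, MulAut.conj_apply]
      group
    rw [h_eq, show (j + 2) * (j + 2 + 3) + 1 = 4 * (j + 2) + 1 + (j * (j + 3) + 1 + 1) by ring,
      pow_add, pow_succ' _ (j * (j + 3) + 1)]
    exact Set.mul_mem_mul (swap_zero_natCast_mem hj)
      (Set.mul_mem_mul addRight_one_mem_generators (ih (by omega)))

theorem subLeft_mem_of_two_blocks {j m c : ℕ} (hjm : j + 2 + (m + 2) = n)
    (hc : c + j / 2 = j + 3 + m / 2) :
    Equiv.subLeft (c : ZMod n) ∈ generators n ^ (j * (j + 3) + 1 + 2 + (m * (m + 3) + 1)) := by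
  have h_rot : Equiv.addRight (-2 : ZMod n) ∈ generators n ^ 2 := by
    simpa using addRight_neg_natCast_mem (n := n) 2
  have h_mem := Set.mul_mem_mul
    (Set.mul_mem_mul
      (inv_mem_generators_pow (blockReversal_mul_pow_mem (n := n) (j := j) (by omega))) h_rot)
    (conj_subLeft_one_mem (blockReversal_mul_pow_mem (n := n) (j := m) (by omega)))
  rw [← pow_add, ← pow_add] at h_mem
  convert h_mem using 1
  have h_sub : Equiv.addRight (-2) * Equiv.subLeft (1 : ZMod n) = Equiv.subLeft (-1) := by
    have h := addRight_neg_mul_subLeft (2 : ZMod n) (-1)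
    rwa [show (2 : ZMod n) + -1 = 1 by norm_num] at h
  have h_glue := blockReversal_mul_addRight hjm (by omega)
  calc Equiv.subLeft (c : ZMod n)
      = (Equiv.addRight 1 ^ (j / 2))⁻¹ * Equiv.addRight ((j + 2 : ℕ) : ZMod n) *
          Equiv.addRight 1 ^ (m / 2) * (Equiv.subLeft 1)⁻¹ := by
        have h_cast := congrArg (Nat.cast (R := ZMod n)) hc
        ext x
        simp only [Perm.mul_apply, nsmul_addRight, nsmul_eq_mul, mul_one, Perm.inv_def,
          addRight_symm, coe_addRight, subLeft_apply, subLeft_symm_apply]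
        push_cast at h_cast ⊢
        linear_combination h_cast
    _ = _ := by
        rw [MulAut.conj_apply, mul_inv_rev, eq_inv_mul_of_mul_eq h_glue, ← h_sub]
        group

theorem choose_two_add_of_balanced {p q : ℕ} (hpq : p ≤ q + 1) (hqp : q ≤ p + 1) :
    (p + q).choose 2 = p * (p - 1) + q * (q - 1) + (p + q) / 2 := by
  wlog h_le : p ≤ q generalizing p q
  · rw [add_comm p q, this hqp hpq (by omega), add_comm (p * _)]
  rw [Nat.choose_two_right]
  refine Nat.div_eq_of_eq_mul_right two_pos ?_
  rcases p with _ | p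
  · obtain rfl | rfl : q = 0 ∨ q = 1 := by omega
    all_goals rfl
  obtain rfl | rfl : q = p + 1 ∨ q = p + 1 + 1 := by omega
  · rw [show (p + 1 + (p + 1)) / 2 = p + 1 by omega, ← add_assoc, Nat.add_sub_cancel,
      Nat.add_sub_cancel]
    ring
  · rw [show (p + 1 + (p + 1 + 1)) / 2 = p + 1 by omega, ← add_assoc, ← add_assoc,
      Nat.add_sub_cancel, Nat.add_sub_cancel, Nat.add_sub_cancel]
    ring

theorem subLeft_half_mem (hn : 4 ≤ n) :
    Equiv.subLeft ((n / 2 + 1 : ℕ) : ZMod n) ∈ generators n ^ (n.choose 2 - n / 2) := by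
  obtain ⟨j, m, hjm, hc, hj, hm⟩ : ∃ j m, j + 2 + (m + 2) = n ∧
      n / 2 + 1 + j / 2 = j + 3 + m / 2 ∧ j ≤ m + 1 ∧ m ≤ j + 1 := by
    rcases Nat.even_or_odd' n with ⟨h, rfl | rfl⟩
    · exact ⟨h - 2, h - 2, by omega⟩
    rcases Nat.even_or_odd' h with ⟨a, rfl | rfl⟩
    · exact ⟨2 * a - 2, 2 * a - 1, by omega⟩
    · exact ⟨2 * a, 2 * a - 1, by omega⟩
  have h_choose := choose_two_add_of_balanced (p := j + 2) (q := m + 2) (by omega) (by omega)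
  have h_length : n.choose 2 - n / 2 = j * (j + 3) + 1 + 2 + (m * (m + 3) + 1) := by
    rw [← hjm, h_choose, Nat.add_sub_cancel, Nat.add_sub_assoc one_le_two,
      Nat.add_sub_assoc one_le_two]
    ring
  rw [h_length]
  exact subLeft_mem_of_two_blocks hjm hc

theorem subLeft_mem (hn : 4 ≤ n) {k : ℕ} (hk : k ≤ n / 2) :
    Equiv.subLeft ((k + 1 : ℕ) : ZMod n) ∈ generators n ^ (n.choose 2 - k) := by
  obtain ⟨e, he⟩ := Nat.exists_eq_add_of_le hk
  have h_half : n / 2 ≤ n.choose 2 := by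
    rw [Nat.choose_two_right]
    exact Nat.div_le_div_right (Nat.le_mul_of_pos_right n (by omega))
  have h_rot : Equiv.addRight (-e : ZMod n) * Equiv.subLeft ((n / 2 + 1 : ℕ) : ZMod n) =
      Equiv.subLeft ((k + 1 : ℕ) : ZMod n) := by
    rw [he, show k + e + 1 = e + (k + 1) by ring, Nat.cast_add, addRight_neg_mul_subLeft]
  rw [← h_rot, show n.choose 2 - k = e + (n.choose 2 - n / 2) by omega, pow_add]
  exact Set.mul_mem_mul (addRight_neg_natCast_mem e) (subLeft_half_mem hn)

/-! ### Words acting on the universal cover -/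

/-- The permutation obtained by multiplying out a word; its last letter acts first. -/
def evalWord (n : ℕ) (L : List Letter) : Equiv.Perm (ZMod n) :=
  (L.map (Letter.perm n)).prod

theorem evalWord_cons (c : Letter) (L : List Letter) :
    evalWord n (c :: L) = c.perm n * evalWord n L :=
  List.prod_cons

/-- The action of a letter lifted to the universal cover `ℤ` of the cycle `ZMod n`. -/
def Letter.lift (n : ℕ) : Letter → ℤ → ℤ
  | swap, z => if (z : ZMod n) = 0 then z + 1 else if (z : ZMod n) = 1 then z - 1 else z
  | rot, z => z + 1
  | rotInv, z => z - 1

/-- The position on the universal cover reached from `z` under a word. -/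
def liftWord (n : ℕ) (L : List Letter) (z : ℤ) : ℤ :=
  L.foldr (Letter.lift n) z

theorem Letter.cast_lift (c : Letter) (z : ℤ) : (c.lift n z : ZMod n) = c.perm n z := by
  cases c
  · rw [Letter.lift, Letter.perm, Equiv.swap_apply_def]
    split_ifs with h₀ h₁
    · simp [h₀]
    · simp [h₁]
    · rfl
  · simp [Letter.lift, Letter.perm]
  · simp [Letter.lift, Letter.perm, sub_eq_add_neg]

theorem cast_liftWord (L : List Letter) (z : ℤ) : (liftWord n L z : ZMod n) = evalWord n L z := by
  induction L with
  | nil => rfl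
  | cons c L ih =>
    rw [liftWord, List.foldr_cons, Letter.cast_lift, ← liftWord, ih]
    rfl

theorem Letter.lift_add_mul (c : Letter) (z k : ℤ) : c.lift n (z + n * k) = c.lift n z + n * k := by
  cases c
  · simp only [Letter.lift, Int.cast_add, Int.cast_mul, Int.cast_natCast, CharP.cast_eq_zero,
      zero_mul, add_zero]
    split_ifs <;> ring
  · exact add_right_comm ..
  · exact add_sub_right_comm ..

theorem liftWord_add_mul (L : List Letter) (z k : ℤ) :
    liftWord n L (z + n * k) = liftWord n L z + n * k := by
  induction L with
  | nil => rfl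
  | cons c L ih =>
    simp only [liftWord, List.foldr_cons] at ih ⊢
    rw [ih, Letter.lift_add_mul]

/-- The rotation carried out by a letter. -/
def Letter.rotation : Letter → ℤ
  | swap => 0
  | rot => 1
  | rotInv => -1

/-- The total rotation carried out by a word, counted with sign. -/
def netRotation (L : List Letter) : ℤ :=
  (L.map Letter.rotation).sum

/-- The number of rotation letters `r`, `r⁻¹` in a word. -/
def rotationCount (L : List Letter) : ℤ :=
  (L.map fun c => |c.rotation|).sum

/-- The site next to which a rotation letter makes a token jump in `potential`: the one about to
cross from `0` to `1` or back. The site of `δ` is irrelevant, its rotation being `0`. -/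
def Letter.site (n : ℕ) : Letter → ZMod n
  | swap => 0
  | rot => 0
  | rotInv => 1

/-- A potential on the universal cover that does not change when `δ` moves a token, and that,
measured in the rotating frame, is changed by a rotation only for the token at its `site`. -/
def potential (n : ℕ) (z : ℤ) : ℤ :=
  (z - 1) / n - z

theorem potential_add_one [NeZero n] (z : ℤ) :
    potential n (z + 1) + 1 = potential n z + if (z : ZMod n) = 0 then 1 else 0 := by
  have hn : (0 : ℤ) < n := by exact_mod_cast NeZero.pos n
  have h_div : z / n = (z - 1) / n + if (z : ZMod n) = 0 then 1 else 0 := by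
    split_ifs with h
    · obtain ⟨k, rfl⟩ := (ZMod.intCast_zmod_eq_zero_iff_dvd z n).1 h
      rw [Int.mul_ediv_cancel_left _ hn.ne', sub_eq_neg_add, Int.add_mul_ediv_left _ _ hn.ne',
        Int.ediv_eq_neg_one_of_neg_of_le (by omega) (by omega)]
      ring
    · have h_mod : z % n ≠ 0 := fun h_mod =>
        h ((ZMod.intCast_zmod_eq_zero_iff_dvd z n).2 (Int.dvd_of_emod_eq_zero h_mod))
      have h_nonneg := Int.emod_nonneg z hn.ne'
      have h_lt := Int.emod_lt_of_pos z hn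
      rw [add_zero]
      conv_rhs => rw [← Int.emod_add_mul_ediv z n, add_sub_right_comm,
        Int.add_mul_ediv_left _ _ hn.ne', Int.ediv_eq_zero_of_lt (by omega) (by omega), zero_add]
  rw [potential, potential, add_sub_cancel_right, h_div]
  ring

theorem potential_add_natCast [NeZero n] (z : ℤ) : potential n (z + n) = potential n z + 1 - n := by
  have hn : (n : ℤ) ≠ 0 := by exact_mod_cast NeZero.ne n
  rw [potential, potential, add_sub_right_comm, Int.add_ediv_of_dvd_right dvd_rfl,
    Int.ediv_self hn]
  ring

theorem potential_one_sub [NeZero n] (z : ℤ) : potential n (1 - z) = -2 - potential n z := by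
  have hn : (0 : ℤ) < n := by exact_mod_cast NeZero.pos n
  have h_nonneg := Int.emod_nonneg (z - 1) hn.ne'
  have h_lt := Int.emod_lt_of_pos (z - 1) hn
  have h_div : -z / n = -1 - (z - 1) / n := by
    rw [show -z = (n - 1 - (z - 1) % n) + n * (-1 - (z - 1) / n) by
        linear_combination Int.emod_add_mul_ediv (z - 1) n,
      Int.add_mul_ediv_left _ _ hn.ne', Int.ediv_eq_zero_of_lt (by omega) (by omega), zero_add]
  rw [potential, potential, sub_sub_cancel_left, h_div]
  ring

theorem potential_antitone [NeZero n] : Antitone (potential n) := by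
  refine antitone_int_of_succ_le fun z => ?_
  have h := potential_add_one (n := n) z
  split_ifs at h <;> linarith

theorem eq_add_one_of_potential_eq (hn : 2 ≤ n) {a b : ℤ} (hab : a < b)
    (h_eq : potential n a = potential n b) : (a : ZMod n) = 0 ∧ b = a + 1 := by
  have : NeZero n := ⟨by omega⟩
  have : Fact (1 < n) := ⟨hn⟩
  have h_zero : ∀ z, a ≤ z → z < b → (z : ZMod n) = 0 := by
    intro z haz hzb
    by_contra h_ne
    have h_step := potential_add_one (n := n) z
    have h_left := potential_antitone (n := n) haz
    have h_right := potential_antitone (n := n) (Int.add_one_le_of_lt hzb)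
    rw [if_neg h_ne] at h_step
    omega
  refine ⟨h_zero a le_rfl hab, le_antisymm (not_lt.1 fun h_lt => ?_) hab⟩
  have h_one := h_zero (a + 1) (by omega) h_lt
  rw [Int.cast_add, h_zero a le_rfl hab, Int.cast_one, zero_add] at h_one
  exact one_ne_zero h_one

theorem Letter.potential_lift [NeZero n] (c : Letter) (z : ℤ) :
    potential n (c.lift n z) + c.rotation =
      potential n z + if (z : ZMod n) = c.site n then c.rotation else 0 := by
  have h_succ := potential_add_one (n := n) z
  have h_pred := potential_add_one (n := n) (z - 1)
  simp only [sub_add_cancel, Int.cast_sub, Int.cast_one, sub_eq_zero] at h_pred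
  cases c
  · rw [lift, rotation, ite_self, add_zero, add_zero]
    split_ifs with h₀ h₁
    · rw [if_pos h₀] at h_succ
      exact add_right_cancel h_succ
    · rw [if_pos h₁] at h_pred
      exact (add_right_cancel h_pred).symm
    · rfl
  · exact h_succ
  · change potential n (z - 1) + -1 = potential n z + if (z : ZMod n) = 1 then -1 else 0
    split_ifs at h_pred ⊢ <;> linarith

/-- The potential reached from `z` under a word, in the frame rotating along with it. -/
def corotatingPotential (n : ℕ) (L : List Letter) (z : ℤ) : ℤ :=
  potential n (liftWord n L z) + netRotation L

theorem liftWord_cons (c : Letter) (L : List Letter) (z : ℤ) :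
    liftWord n (c :: L) z = c.lift n (liftWord n L z) := rfl

theorem liftWord_append (A B : List Letter) (z : ℤ) :
    liftWord n (A ++ B) z = liftWord n A (liftWord n B z) :=
  List.foldr_append

theorem netRotation_cons (c : Letter) (L : List Letter) :
    netRotation (c :: L) = c.rotation + netRotation L :=
  List.sum_cons

theorem netRotation_append (A B : List Letter) :
    netRotation (A ++ B) = netRotation A + netRotation B := by
  rw [netRotation, List.map_append, List.sum_append, netRotation, netRotation]

theorem rotationCount_cons (c : Letter) (L : List Letter) :
    rotationCount (c :: L) = |c.rotation| + rotationCount L :=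
  List.sum_cons

theorem rotationCount_append (A B : List Letter) :
    rotationCount (A ++ B) = rotationCount A + rotationCount B := by
  rw [rotationCount, List.map_append, List.sum_append, rotationCount, rotationCount]

theorem corotatingPotential_nil (z : ℤ) : corotatingPotential n [] z = potential n z :=
  add_zero _

theorem corotatingPotential_cons [NeZero n] (c : Letter) (L : List Letter) (z : ℤ) :
    corotatingPotential n (c :: L) z = corotatingPotential n L z +
      if (liftWord n L z : ZMod n) = c.site n then c.rotation else 0 := by
  rw [corotatingPotential, corotatingPotential, netRotation_cons, liftWord_cons, ← add_assoc,
    Letter.potential_lift]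
  ring

theorem corotatingPotential_append (A B : List Letter) (z : ℤ) :
    corotatingPotential n (A ++ B) z =
      corotatingPotential n A (liftWord n B z) + netRotation B := by
  rw [corotatingPotential, corotatingPotential, liftWord_append, netRotation_append, add_assoc]

section Tokens

variable {ι : Type*} {y : ι → ℤ}

theorem injective_cast_liftWord (L : List Letter)
    (hy : Function.Injective fun x => (y x : ZMod n)) :
    Function.Injective fun x => (liftWord n L (y x) : ZMod n) := by
  intro x x' h
  simp only [cast_liftWord] at h
  exact hy ((evalWord n L).injective h)

theorem sum_abs_corotatingPotential_sub_le [Fintype ι] [NeZero n] (L : List Letter)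
    (hy : Function.Injective fun x => (y x : ZMod n)) :
    ∑ x, |corotatingPotential n L (y x) - potential n (y x)| ≤ rotationCount L := by
  classical
  induction L with
  | nil => simp [corotatingPotential_nil, rotationCount]
  | cons c L ih =>
    have h_jump : ∑ x, |if (liftWord n L (y x) : ZMod n) = c.site n then c.rotation else 0| ≤
        |c.rotation| := by
      simp only [apply_ite abs, abs_zero]
      by_cases h_hit : ∃ x, (liftWord n L (y x) : ZMod n) = c.site n
      · obtain ⟨x, hx⟩ := h_hit
        rw [← hx, Finset.sum_congr rfl fun x' _ => if_congr
          ((injective_cast_liftWord L hy).eq_iff (a := x') (b := x)) rfl rfl,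
          Finset.sum_ite_eq_of_mem' _ _ _ (Finset.mem_univ x)]
      · push Not at h_hit
        rw [Finset.sum_eq_zero fun x _ => if_neg (h_hit x)]
        exact abs_nonneg _
    calc ∑ x, |corotatingPotential n (c :: L) (y x) - potential n (y x)|
        ≤ ∑ x, (|if (liftWord n L (y x) : ZMod n) = c.site n then c.rotation else 0| +
            |corotatingPotential n L (y x) - potential n (y x)|) := by
          refine Finset.sum_le_sum fun x _ => ?_
          rw [corotatingPotential_cons, add_sub_right_comm, add_comm]
          exact abs_add_le _ _
      _ ≤ rotationCount (c :: L) := by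
          rw [Finset.sum_add_distrib, rotationCount_cons]
          exact add_le_add h_jump ih

theorem sum_abs_endpoints_sub_le [Fintype ι] [NeZero n] (A B : List Letter)
    (hy : Function.Injective fun x => (y x : ZMod n)) :
    ∑ x, |corotatingPotential n (A ++ B) (y x) + potential n (y x) -
      2 * corotatingPotential n B (y x)| ≤ rotationCount (A ++ B) := by
  have h_after := sum_abs_corotatingPotential_sub_le A (injective_cast_liftWord B hy)
  have h_before := sum_abs_corotatingPotential_sub_le B hy
  rw [rotationCount_append]
  refine le_trans ?_ (add_le_add h_after h_before)
  rw [← Finset.sum_add_distrib]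
  refine Finset.sum_le_sum fun x _ => ?_
  rw [corotatingPotential_append]
  refine le_trans (le_of_eq (congrArg abs ?_)) (abs_sub _ _)
  rw [corotatingPotential.eq_def n B]
  ring

/-- The ordered pairs of indices whose relative order differs in `y` and `w`. -/
def discordantPairs [Fintype ι] (y w : ι → ℤ) : Finset (ι × ι) :=
  {p | ¬(y p.1 < y p.2 ↔ w p.1 < w p.2)}

theorem discordantPairs_subset [Fintype ι] (y w u : ι → ℤ) [DecidableEq ι] :
    discordantPairs y u ⊆ discordantPairs y w ∪ discordantPairs w u := by
  intro p
  simp only [discordantPairs, Finset.mem_union, Finset.mem_filter_univ]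
  tauto

theorem lift_swap_lt_lift_swap_iff {a b : ℤ} (hab : ¬((a : ZMod n) = 0 ∧ (b : ZMod n) = 1))
    (hba : ¬((a : ZMod n) = 1 ∧ (b : ZMod n) = 0)) :
    Letter.swap.lift n a < Letter.swap.lift n b ↔ a < b := by
  have h_succ : b = a + 1 → ((a : ZMod n) = 0 ↔ (b : ZMod n) = 1) := by rintro rfl; simp
  simp only [Letter.lift]
  grind

theorem card_discordantPairs_lift_le [Fintype ι] (c : Letter) {w : ι → ℤ}
    (hw : Function.Injective fun x => (w x : ZMod n)) :
    ((discordantPairs w fun x => c.lift n (w x)).card : ℤ) ≤ 2 * (1 - |c.rotation|) := by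
  classical
  cases c
  · let pairsAt (a b : ZMod n) : Finset (ι × ι) := {p | (w p.1 : ZMod n) = a ∧ (w p.2 : ZMod n) = b}
    have h_one (a b : ZMod n) : (pairsAt a b).card ≤ 1 := by
      refine Finset.card_le_one.2 fun p hp q hq => ?_
      rw [Finset.mem_filter_univ] at hp hq
      exact Prod.ext (hw (hp.1.trans hq.1.symm)) (hw (hp.2.trans hq.2.symm))
    have h_subset : (discordantPairs w fun x => Letter.swap.lift n (w x)) ⊆
        pairsAt 0 1 ∪ pairsAt 1 0 := by
      intro p hp
      rw [discordantPairs, Finset.mem_filter_univ] at hp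
      rw [Finset.mem_union, Finset.mem_filter_univ, Finset.mem_filter_univ]
      by_contra! h
      exact hp (lift_swap_lt_lift_swap_iff (not_and.2 h.1) (not_and.2 h.2)).symm
    have h_card := (Finset.card_le_card h_subset).trans (Finset.card_union_le _ _)
    rw [Letter.rotation, abs_zero]
    linarith [h_one 0 1, h_one 1 0]
  · simp [discordantPairs, Letter.lift, Letter.rotation]
  · simp [discordantPairs, Letter.lift, Letter.rotation]

theorem card_discordantPairs_le [Fintype ι] (L : List Letter)
    (hy : Function.Injective fun x => (y x : ZMod n)) :
    ((discordantPairs y fun x => liftWord n L (y x)).card : ℤ) ≤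
      2 * (L.length - rotationCount L) := by
  classical
  induction L with
  | nil => simp [discordantPairs, liftWord, rotationCount]
  | cons c L ih =>
    have h_letter := card_discordantPairs_lift_le c (injective_cast_liftWord L hy)
    have h_card : (discordantPairs y fun x => liftWord n (c :: L) (y x)).card ≤ _ :=
      (Finset.card_le_card (discordantPairs_subset y (fun x => liftWord n L (y x)) _)).trans
        (Finset.card_union_le _ _)
    simp only [liftWord_cons] at h_card ⊢
    rw [rotationCount_cons, List.length_cons]
    push_cast
    linarith

end Tokens

/-! ### Words acting as a reflection -/

theorem emod_two_le_abs_sub_two_mul (c y : ℤ) : c % 2 ≤ |c - 2 * y| := by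
  rcases abs_cases (c - 2 * y) with ⟨h_abs, _⟩ | ⟨h_abs, _⟩ <;> rw [h_abs] <;> omega

theorem card_sq_le_two_mul_sum_abs_sub_two_mul (c : ℤ) (S : Finset ℤ) :
    (S.card : ℤ) ^ 2 - 1 + c % 2 ≤ 2 * ∑ y ∈ S, |c - 2 * y| := by
  induction S using Finset.strongInduction with
  | H S ih =>
    rcases S.eq_empty_or_nonempty with rfl | h_nonempty
    · simp only [Finset.card_empty, Finset.sum_empty]
      omega
    obtain ⟨a, rfl⟩ | h_nontrivial := h_nonempty.exists_eq_singleton_or_nontrivial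
    · rw [Finset.card_singleton, Finset.sum_singleton]
      have := emod_two_le_abs_sub_two_mul c a
      omega
    set a := S.min' h_nonempty
    set b := S.max' h_nonempty
    have ha : a ∈ S := S.min'_mem h_nonempty
    have h_lt : a < b :=
      S.min'_lt_max'_of_card (Finset.one_lt_card_iff_nontrivial.2 h_nontrivial)
    have hb : b ∈ S.erase a := Finset.mem_erase.2 ⟨h_lt.ne', S.max'_mem h_nonempty⟩
    have h_spread : (S.card : ℤ) ≤ b - a + 1 := by
      have h_subset : S ⊆ Finset.Icc a b := fun y hy =>
        Finset.mem_Icc.2 ⟨S.min'_le y hy, S.le_max' y hy⟩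
      have h_card := Finset.card_le_card h_subset
      rw [Int.card_Icc] at h_card
      omega
    have h_rest := ih ((S.erase a).erase b)
      ((Finset.erase_ssubset hb).trans (Finset.erase_ssubset ha))
    have h_card : (((S.erase a).erase b).card : ℤ) = S.card - 2 := by
      have h₁ := Finset.card_erase_add_one ha
      have h₂ := Finset.card_erase_add_one hb
      omega
    rw [h_card] at h_rest
    rw [← Finset.add_sum_erase _ _ ha, ← Finset.add_sum_erase _ _ hb]
    have h_ends : 2 * (b - a) ≤ |c - 2 * a| + |c - 2 * b| :=
      le_trans (le_of_eq (by ring)) ((le_abs_self (c - 2 * a - (c - 2 * b))).trans (abs_sub _ _))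
    linarith

theorem card_sq_le_of_injOn {ι : Type*} (c : ℤ) {U : Finset ι} {f : ι → ℤ} (hf : Set.InjOn f U) :
    (U.card : ℤ) ^ 2 - 1 + c % 2 ≤ 2 * ∑ x ∈ U, |c - 2 * f x| := by
  classical
  have h := card_sq_le_two_mul_sum_abs_sub_two_mul c (U.image f)
  rwa [Finset.card_image_of_injOn hf, Finset.sum_image hf] at h

theorem liftWord_of_forall_suffix {L : List Letter} {z : ℤ}
    (hz : ∀ B, B <:+ L → evalWord n B z ≠ 0 ∧ evalWord n B z ≠ 1) :
    liftWord n L z = z + netRotation L := by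
  induction L with
  | nil => exact (add_zero z).symm
  | cons c L ih =>
    obtain ⟨h_zero, h_one⟩ := hz L (List.suffix_cons c L)
    rw [← cast_liftWord] at h_zero h_one
    have h_lift : c.lift n (liftWord n L z) = liftWord n L z + c.rotation := by
      cases c
      · rw [Letter.lift, if_neg h_zero, if_neg h_one, Letter.rotation, add_zero]
      · rfl
      · rfl
    rw [liftWord_cons, h_lift, ih fun B hB => hz B (hB.trans (List.suffix_cons c L)),
      netRotation_cons]
    ring

theorem corotatingPotential_of_forall_suffix [NeZero n] {L : List Letter} {z : ℤ}
    (hz : ∀ B, B <:+ L → evalWord n B z ≠ 0 ∧ evalWord n B z ≠ 1) :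
    corotatingPotential n L z = potential n z := by
  induction L with
  | nil => exact corotatingPotential_nil z
  | cons c L ih =>
    obtain ⟨h_zero, h_one⟩ := hz L (List.suffix_cons c L)
    have h_site : evalWord n L z ≠ c.site n := by
      cases c
      exacts [h_zero, h_zero, h_one]
    rw [corotatingPotential_cons, cast_liftWord, if_neg h_site, add_zero,
      ih fun B hB => hz B (hB.trans (List.suffix_cons c L))]

theorem inv_apply_zero_mem_iff {L : List Letter} {T : Finset (ZMod n)}
    (hT : ∀ B, B <:+ L → ((evalWord n B)⁻¹ 0 ∈ T ↔ (evalWord n B)⁻¹ 1 ∈ T)) :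
    (evalWord n L)⁻¹ 0 ∈ T ↔ 0 ∈ T := by
  induction L with
  | nil => rfl
  | cons c L ih =>
    have h_tail := hT L (List.suffix_cons c L)
    have h_cons := hT (c :: L) List.suffix_rfl
    rw [← ih fun B hB => hT B (hB.trans (List.suffix_cons c L))]
    simp only [evalWord_cons, mul_inv_rev, Equiv.Perm.mul_apply] at h_cons ⊢
    cases c
    · rw [Letter.perm, Equiv.swap_inv, Equiv.swap_apply_left]
      exact h_tail.symm
    · rw [h_cons, Letter.perm, Equiv.neg_addRight, Equiv.coe_addRight]
      simp only [add_neg_cancel]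
    · rw [Letter.perm, Equiv.neg_addRight, Equiv.coe_addRight]
      simp only [neg_neg, zero_add]
      exact h_tail.symm

theorem forall_suffix_apply_ne {L : List Letter} {T : Finset (ZMod n)}
    (hT : ∀ B, B <:+ L → ((evalWord n B)⁻¹ 0 ∈ T ↔ (evalWord n B)⁻¹ 1 ∈ T)) {x : ZMod n}
    (hx : ¬(x ∈ T ↔ 0 ∈ T)) (B : List Letter) (hB : B <:+ L) :
    evalWord n B x ≠ 0 ∧ evalWord n B x ≠ 1 := by
  have h_zero := inv_apply_zero_mem_iff fun C hC => hT C (hC.trans hB)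
  refine ⟨fun h_eq => hx ?_, fun h_eq => hx ?_⟩
  · rwa [Equiv.Perm.inv_eq_iff_eq.2 h_eq.symm] at h_zero
  · rwa [hT B hB, Equiv.Perm.inv_eq_iff_eq.2 h_eq.symm] at h_zero

/-- A lift `s` of the identity of `ZMod n` along which the word `L` acts on the universal cover as
a reflection: as `z ↦ 1 - z` off `T` and as `z ↦ 1 - z + n` on `T`. -/
structure ReflectionLift (n : ℕ) (L : List Letter) (s : ZMod n → ℤ) (T : Finset (ZMod n)) :
    Prop where
  cast_eq (x : ZMod n) : (s x : ZMod n) = x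
  liftWord_of_mem {x : ZMod n} : x ∈ T → liftWord n L (s x) = 1 - s x + n
  liftWord_of_notMem {x : ZMod n} : x ∉ T → liftWord n L (s x) = 1 - s x

theorem exists_reflectionLift [NeZero n] {L : List Letter}
    (hL : evalWord n L = Equiv.subLeft 1) : ∃ s T, ReflectionLift n L s T := by
  obtain ⟨t, ht⟩ := (ZMod.intCast_surjective (n := n)).hasRightInverse
  have h_wind (x : ZMod n) : ∃ w, liftWord n L (t x) = 1 - t x + n * w := by
    have h_dvd : (n : ℤ) ∣ liftWord n L (t x) - (1 - t x) := by
      rw [← ZMod.intCast_zmod_eq_zero_iff_dvd, Int.cast_sub, cast_liftWord, hL]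
      simp
    obtain ⟨w, hw⟩ := h_dvd
    exact ⟨w, by linear_combination hw⟩
  choose w hw using h_wind
  have h_lift (x : ZMod n) :
      liftWord n L (t x - n * (w x / 2)) = 1 - (t x - n * (w x / 2)) + n * (w x % 2) := by
    have h_shift := liftWord_add_mul (n := n) L (t x) (-(w x / 2))
    rw [mul_neg, ← sub_eq_add_neg, hw] at h_shift
    linear_combination h_shift - n * Int.emod_add_mul_ediv (w x) 2
  refine ⟨fun x => t x - n * (w x / 2), ({x | w x % 2 = 1} : Finset (ZMod n)),
    fun x => by simp [ht x], ?_, ?_⟩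
  · intro x hx
    rw [h_lift, (Finset.mem_filter_univ x).1 hx, mul_one]
  · intro x hx
    rw [Finset.mem_filter_univ] at hx
    rw [h_lift, show w x % 2 = 0 by omega, mul_zero, add_zero]

theorem corotatingPotential_injOn (hn : 2 ≤ n) (B : List Letter) {s : ZMod n → ℤ}
    (hs : ∀ x, (s x : ZMod n) = x) {U : Set (ZMod n)}
    (hU : ¬((evalWord n B)⁻¹ 0 ∈ U ∧ (evalWord n B)⁻¹ 1 ∈ U)) :
    Set.InjOn (fun x => corotatingPotential n B (s x)) U := by
  intro x hx x' hx' h_eq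
  by_contra h_ne
  wlog h_lt : liftWord n B (s x) < liftWord n B (s x') generalizing x x'
  · refine this hx' hx h_eq.symm (Ne.symm h_ne)
      (lt_of_le_of_ne (not_lt.1 h_lt) fun h_same => h_ne ?_)
    have h_cast := congrArg (Int.cast (R := ZMod n)) h_same
    rw [cast_liftWord, cast_liftWord, hs, hs] at h_cast
    exact ((evalWord n B).injective h_cast).symm
  obtain ⟨h_zero, h_succ⟩ := eq_add_one_of_potential_eq hn h_lt (add_right_cancel h_eq)
  have h_one := congrArg (Int.cast (R := ZMod n)) h_succ
  rw [Int.cast_add, h_zero, zero_add, Int.cast_one, cast_liftWord, hs] at h_one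
  rw [cast_liftWord, hs] at h_zero
  rw [Equiv.Perm.inv_eq_iff_eq.2 h_zero.symm, Equiv.Perm.inv_eq_iff_eq.2 h_one.symm] at hU
  exact hU ⟨hx, hx'⟩

namespace ReflectionLift

variable {L : List Letter} {s : ZMod n → ℤ} {T : Finset (ZMod n)}

theorem injective_cast (h : ReflectionLift n L s T) :
    Function.Injective fun x => (s x : ZMod n) := by
  intro x x' hx
  simpa only [h.cast_eq] using hx

theorem card_offDiag_le [NeZero n] (h : ReflectionLift n L s T) :
    (T.card : ℤ) * (T.card - 1) + (Tᶜ.card : ℤ) * (Tᶜ.card - 1) ≤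
      2 * (L.length - rotationCount L) := by
  have h_inj : Function.Injective s := fun x x' hx => h.injective_cast (congrArg _ hx)
  have h_subset : T.offDiag ∪ Tᶜ.offDiag ⊆ discordantPairs s fun x => liftWord n L (s x) := by
    rintro ⟨x, x'⟩ hp
    simp only [Finset.mem_union, Finset.mem_offDiag, Finset.mem_compl] at hp
    rw [discordantPairs, Finset.mem_filter_univ]
    dsimp only
    rcases hp with ⟨hx, hx', h_ne⟩ | ⟨hx, hx', h_ne⟩
    · have := h_inj.ne h_ne
      rw [h.liftWord_of_mem hx, h.liftWord_of_mem hx']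
      omega
    · have := h_inj.ne h_ne
      rw [h.liftWord_of_notMem hx, h.liftWord_of_notMem hx']
      omega
  have h_disjoint : Disjoint T.offDiag Tᶜ.offDiag := by
    rw [Finset.disjoint_left]
    simp +contextual
  have h_card := Finset.card_le_card h_subset
  rw [Finset.card_union_of_disjoint h_disjoint, Finset.offDiag_card, Finset.offDiag_card] at h_card
  refine le_trans (le_of_eq ?_) ((Nat.cast_le.2 h_card).trans
    (card_discordantPairs_le L h.injective_cast))
  push_cast [Nat.le_mul_self]
  ring

theorem sum_abs_add_sum_abs_le [NeZero n] (h : ReflectionLift n L s T) {B : List Letter}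
    (hB : B <:+ L) :
    ∑ x ∈ T, |netRotation L - 1 - n - 2 * corotatingPotential n B (s x)| +
      ∑ x ∈ Tᶜ, |netRotation L - 2 - 2 * corotatingPotential n B (s x)| ≤ rotationCount L := by
  obtain ⟨A, rfl⟩ := hB
  refine le_trans (le_of_eq ?_) (sum_abs_endpoints_sub_le A B h.injective_cast)
  rw [← Finset.sum_add_sum_compl T]
  congr 1
  · refine Finset.sum_congr rfl fun x hx => congrArg abs ?_
    rw [corotatingPotential.eq_def n (A ++ B), h.liftWord_of_mem hx, potential_add_natCast,
      potential_one_sub]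
    ring
  · refine Finset.sum_congr rfl fun x hx => congrArg abs ?_
    rw [corotatingPotential.eq_def n (A ++ B), h.liftWord_of_notMem (Finset.mem_compl.1 hx),
      potential_one_sub]
    ring

theorem mul_pred_le_two_mul_length_of_suffix (hn : 2 ≤ n) (h : ReflectionLift n L s T)
    {B : List Letter} (hB : B <:+ L) (h_sep : ¬((evalWord n B)⁻¹ 0 ∈ T ↔ (evalWord n B)⁻¹ 1 ∈ T)) :
    (n : ℤ) * (n - 1) ≤ 2 * L.length := by
  have : NeZero n := ⟨by omega⟩
  have h_mem := card_sq_le_of_injOn (netRotation L - 1 - n)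
    (corotatingPotential_injOn hn B h.cast_eq (U := T) (by simp only [Finset.mem_coe]; tauto))
  have h_notMem := card_sq_le_of_injOn (netRotation L - 2) (corotatingPotential_injOn hn B h.cast_eq
    (U := (Tᶜ : Finset (ZMod n))) (by simp only [Finset.mem_coe, Finset.mem_compl]; tauto))
  have h_rotations := h.sum_abs_add_sum_abs_le hB
  have h_swaps := h.card_offDiag_le
  have h_card : (T.card : ℤ) + Tᶜ.card = n := by
    exact_mod_cast T.card_add_card_compl.trans (ZMod.card n)
  have h_bound : (n : ℤ) * (n - 1) + ((T.card : ℤ) - Tᶜ.card) ^ 2 - 2 +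
      ((netRotation L - 1 - n) % 2 + (netRotation L - 2) % 2) ≤ 2 * L.length := by
    rw [← h_card] at h_mem h_rotations ⊢
    linarith
  have h_even := Int.even_iff.1 (Int.even_mul_pred_self n)
  rcases eq_or_ne (T.card : ℤ) Tᶜ.card with h_eq | h_ne
  · rw [h_eq, sub_self] at h_bound
    omega
  · have h_sq := (sq_pos_iff (a := (T.card : ℤ) - Tᶜ.card)).2 (sub_ne_zero.2 h_ne)
    omega

theorem mem_of_forall_suffix [NeZero n] (h : ReflectionLift n L s T) {x : ZMod n}
    (hx : ∀ B, B <:+ L → evalWord n B x ≠ 0 ∧ evalWord n B x ≠ 1) :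
    x ∈ T ∧ 2 * s x = 1 + n - netRotation L := by
  rw [← h.cast_eq x] at hx
  have h_lift := liftWord_of_forall_suffix hx
  have h_potential := corotatingPotential_of_forall_suffix hx
  by_cases h_mem : x ∈ T
  · rw [h.liftWord_of_mem h_mem] at h_lift
    exact ⟨h_mem, by linarith⟩
  · rw [h.liftWord_of_notMem h_mem] at h_lift
    rw [corotatingPotential, h.liftWord_of_notMem h_mem, potential_one_sub] at h_potential
    omega

theorem card_eq_or_le_one [NeZero n] (h : ReflectionLift n L s T)
    (hT : ∀ B, B <:+ L → ((evalWord n B)⁻¹ 0 ∈ T ↔ (evalWord n B)⁻¹ 1 ∈ T)) :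
    T.card = n ∨ 0 ∉ T ∧ 1 ∉ T ∧ T.card ≤ 1 := by
  have h_unvisited {x : ZMod n} (hx : ¬(x ∈ T ↔ 0 ∈ T)) :=
    h.mem_of_forall_suffix (forall_suffix_apply_ne hT hx)
  by_cases h_zero : 0 ∈ T
  · left
    have h_univ : T = Finset.univ := Finset.eq_univ_of_forall fun x => by
      by_contra hx
      exact hx (h_unvisited fun h_iff => hx (h_iff.2 h_zero)).1
    rw [h_univ, Finset.card_univ, ZMod.card]
  · refine Or.inr ⟨h_zero, (hT [] L.nil_suffix).not.1 h_zero, Finset.card_le_one.2 ?_⟩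
    intro x hx x' hx'
    have h_left := (h_unvisited fun h_iff => h_zero (h_iff.1 hx)).2
    have h_right := (h_unvisited fun h_iff => h_zero (h_iff.1 hx')).2
    rw [← h.cast_eq x, ← h.cast_eq x', show s x = s x' by omega]

theorem sub_one_le_rotationCount (hn : 4 ≤ n) (h : ReflectionLift n L s T)
    (h_zero : 0 ∉ T) (h_one : 1 ∉ T) (h_card : T.card = 1) :
    (n : ℤ) - 1 ≤ rotationCount L := by
  have : NeZero n := ⟨by omega⟩
  have h_mem : (0 : ZMod n) ∈ Tᶜ := Finset.mem_compl.2 h_zero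
  have h_rest := card_sq_le_of_injOn (netRotation L - 2)
    (corotatingPotential_injOn (by omega) [] h.cast_eq (U := (Tᶜ.erase 0 : Finset (ZMod n)))
      (by simp [evalWord]))
  have h_total := h.sum_abs_add_sum_abs_le L.nil_suffix
  obtain ⟨z, rfl⟩ := Finset.card_eq_one.1 h_card
  rw [Finset.sum_singleton, ← Finset.add_sum_erase _ _ h_mem] at h_total
  have h_parity := emod_two_le_abs_sub_two_mul (netRotation L - 1 - n)
    (corotatingPotential n [] (s z))
  have h_parity_zero := emod_two_le_abs_sub_two_mul (netRotation L - 2)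
    (corotatingPotential n [] (s 0))
  have h_card_rest : ((({z}ᶜ : Finset (ZMod n)).erase 0).card : ℤ) = n - 2 := by
    rw [Finset.card_erase_of_mem h_mem, Finset.card_compl, h_card, ZMod.card]
    omega
  rw [h_card_rest] at h_rest
  rcases hn.eq_or_lt with rfl | hn
  · norm_num at *
    omega
  · have h_large : (0 : ℤ) ≤ (n - 1) * (n - 5) := by
      apply mul_nonneg <;> omega
    have h_nonneg := Int.emod_nonneg (netRotation L - 2) two_ne_zero
    have h_nonneg' := Int.emod_nonneg (netRotation L - 1 - n) two_ne_zero
    linarith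

theorem mul_pred_le_two_mul_length (hn : 4 ≤ n) (h : ReflectionLift n L s T) :
    (n : ℤ) * (n - 1) ≤ 2 * L.length := by
  have : NeZero n := ⟨by omega⟩
  by_cases hT : ∀ B, B <:+ L → ((evalWord n B)⁻¹ 0 ∈ T ↔ (evalWord n B)⁻¹ 1 ∈ T)
  · have h_swaps := h.card_offDiag_le
    have h_compl : (Tᶜ.card : ℤ) = n - T.card := by
      have := T.card_add_card_compl.trans (ZMod.card n)
      omega
    have h_nonneg : 0 ≤ rotationCount L :=
      (Finset.sum_nonneg fun _ _ => abs_nonneg _).trans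
        (sum_abs_corotatingPotential_sub_le L h.injective_cast)
    rw [h_compl] at h_swaps
    rcases h.card_eq_or_le_one hT with h_card | ⟨h_zero, h_one, h_card⟩
    · rw [h_card] at h_swaps
      linarith
    · rcases Nat.le_one_iff_eq_zero_or_eq_one.1 h_card with h_card | h_card
      · rw [h_card, Nat.cast_zero] at h_swaps
        linarith
      · have h_rotations := h.sub_one_le_rotationCount hn h_zero h_one h_card
        rw [h_card, Nat.cast_one] at h_swaps
        linarith
  · push Not at hT
    obtain ⟨B, hB, h_sep⟩ := hT
    exact h.mul_pred_le_two_mul_length_of_suffix (by omega) hB (by tauto)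

end ReflectionLift

theorem choose_two_le_of_subLeft_mem (hn : 4 ≤ n) {k m : ℕ}
    (h : Equiv.subLeft ((k + 1 : ℕ) : ZMod n) ∈ generators n ^ m) : n.choose 2 ≤ m + k := by
  have : NeZero n := ⟨by omega⟩
  have h_one : Equiv.subLeft 1 ∈ generators n ^ (k + m) := by
    rw [pow_add]
    have h_mem := Set.mul_mem_mul (addRight_neg_natCast_mem k) h
    rwa [Nat.cast_add, Nat.cast_one, addRight_neg_mul_subLeft] at h_mem
  obtain ⟨l, hl, h_prod, h_length⟩ := mem_pow_iff_exists_list.1 h_one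
  obtain ⟨L, rfl⟩ := (Set.range_list_map (Letter.perm n)).ge hl
  obtain ⟨s, T, h_lift⟩ := exists_reflectionLift (n := n) (L := L) h_prod
  have h_two_mul := h_lift.mul_pred_le_two_mul_length hn
  rw [← L.length_map (f := Letter.perm n), h_length] at h_two_mul
  rw [Nat.choose_two_right]
  refine Nat.div_le_of_le_mul ?_
  zify [show 1 ≤ n by omega]
  rwa [← Nat.cast_add, add_comm]

/-! ### Numbering the points by `ZMod n` -/

section Transport

variable [NeZero n]

/-- Numbering the points by `ZMod n` instead of `Fin n`. -/
def permZMod (n : ℕ) [NeZero n] : Perm (Fin n) ≃* Perm (ZMod n) :=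
  (ZMod.finEquiv n).toEquiv.permCongrHom

theorem permZMod_eq_iff {g : Perm (Fin n)} {h : Perm (ZMod n)} :
    permZMod n g = h ↔ ∀ x, ZMod.finEquiv n (g x) = h (ZMod.finEquiv n x) := by
  rw [Equiv.ext_iff, (ZMod.finEquiv n).surjective.forall]
  exact forall_congr' fun x => by rw [permZMod, permCongrHom_coe, permCongr_apply]; simp

theorem permZMod_finRotate : permZMod n (finRotate n) = Equiv.addRight 1 :=
  permZMod_eq_iff.2 fun x => by rw [finRotate_apply, coe_addRight, map_add, map_one]

theorem permZMod_delta (hn : 2 ≤ n) : permZMod n (delta n hn) = swap 0 1 := by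
  obtain ⟨m, rfl⟩ := Nat.exists_eq_add_of_le' hn
  rfl

theorem permZMod_revPerm : permZMod n Fin.revPerm = Equiv.subLeft (-1) := by
  obtain ⟨m, rfl⟩ := Nat.exists_eq_succ_of_ne_zero (NeZero.ne n)
  refine permZMod_eq_iff.2 fun x => ?_
  rw [Fin.revPerm_apply, ← Fin.last_sub, ← neg_neg (Fin.last m), Fin.neg_last, map_sub, map_neg,
    map_one, subLeft_apply]

theorem image_permZMod_gens (hn : 2 ≤ n) : permZMod n '' gens n hn = generators n := by
  rw [gens, Set.image_insert_eq, Set.image_pair, map_inv, permZMod_delta, permZMod_finRotate,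
    neg_addRight]
  ext g
  constructor
  · rintro (rfl | rfl | rfl)
    exacts [swap_mem_generators, addRight_one_mem_generators, addRight_neg_one_mem_generators]
  · rintro ⟨c, rfl⟩
    cases c <;> simp [Letter.perm]

theorem permZMod_revPerm_mul_finRotate_pow_inv {i : ℕ} (hi : i ≤ n) :
    permZMod n (Fin.revPerm * finRotate n ^ (n - i))⁻¹ = Equiv.subLeft ((i : ZMod n) - 1) := by
  rw [map_inv, map_mul, map_pow, permZMod_finRotate, permZMod_revPerm, nsmul_addRight,
    inv_eq_iff_eq_inv, Perm.inv_def, symm_subLeft]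
  ext x
  rw [Perm.mul_apply, coe_addRight, subLeft_apply, subLeft_apply, nsmul_one, Nat.cast_sub hi,
    CharP.cast_eq_zero]
  ring

theorem isMinWordLen_iff (hn : 2 ≤ n) {g : Perm (Fin n)} {d : ℕ} :
    IsMinWordLen n hn g d ↔ permZMod n g ∈ generators n ^ d ∧
      ∀ m, permZMod n g ∈ generators n ^ m → d ≤ m := by
  have h_mem (m : ℕ) : permZMod n g ∈ generators n ^ m ↔
      ∃ l : List (Perm (Fin n)), (∀ x ∈ l, x ∈ gens n hn) ∧ l.prod = g ∧ l.length = m := by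
    rw [← image_permZMod_gens hn, ← Set.image_pow, (permZMod n).injective.mem_set_image,
      mem_pow_iff_exists_list]
  simp only [h_mem, IsMinWordLen]
  refine and_congr_right' ⟨?_, fun h l hl h_prod => h _ ⟨l, hl, h_prod, rfl⟩⟩
  rintro h _ ⟨l, hl, h_prod, rfl⟩
  exact h l hl h_prod

end Transport

theorem balanced_sum_eq_choose_two_sub {n i : ℕ} (hn : 4 ≤ n) (hi₁ : 2 ≤ i) (hi₂ : i ≤ n / 2 + 2) :
    ((n + 1) / 2 * ((n + 1) / 2 - 1) - 1) + (n / 2 * (n / 2 - 1) - 1) + (n / 2 + 4 - i) =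
      n.choose 2 - (i - 2) := by
  have h_choose := choose_two_add_of_balanced (p := n / 2) (q := (n + 1) / 2) (by omega) (by omega)
  have h_lower : 0 < n / 2 * (n / 2 - 1) := Nat.mul_pos (by omega) (by omega)
  have h_upper : 0 < (n + 1) / 2 * ((n + 1) / 2 - 1) := Nat.mul_pos (by omega) (by omega)
  rw [show n / 2 + (n + 1) / 2 = n by omega] at h_choose
  omega

end LRX

/-- For `n ≥ 4` and `2 ≤ i ≤ ⌊n/2⌋ + 2`, with `s = [n n-1 … 1]` and
`r = (1 2 … n)`, `dist(s r^(n-i), 1) = ⌈n/2⌉(⌈n/2⌉-1) - 1 + ⌊n/2⌋(⌊n/2⌋-1) - 1 +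
⌊n/2⌋ - i + 4` in the word metric with respect to `{(1 2), r, r⁻¹}`. -/
theorem stmt12 (n : ℕ) (hn : 4 ≤ n) (i : ℕ) (hi1 : 2 ≤ i) (hi2 : i ≤ n / 2 + 2) :
    IsMinWordLen n (by omega)
      (((Fin.revPerm : Equiv.Perm (Fin n)) * (finRotate n) ^ (n - i))⁻¹)
      (((n + 1) / 2 * ((n + 1) / 2 - 1) - 1) + (n / 2 * (n / 2 - 1) - 1) + (n / 2 + 4 - i)) := by
  have : NeZero n := ⟨by omega⟩
  obtain ⟨k, rfl⟩ := Nat.exists_eq_add_of_le' hi1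
  have h_target : ((k + 2 : ℕ) : ZMod n) - 1 = (k + 1 : ℕ) := by push_cast; ring
  rw [LRX.balanced_sum_eq_choose_two_sub hn hi1 hi2, Nat.add_sub_cancel, LRX.isMinWordLen_iff,
    LRX.permZMod_revPerm_mul_finRotate_pow_inv (by omega), h_target]
  exact ⟨LRX.subLeft_mem hn (by omega), fun m h =>
    Nat.sub_le_of_le_add (LRX.choose_two_le_of_subLeft_mem hn h)⟩
end
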